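/- Assume the sub-critical range q > 1 and (2/3)q + 1 < p < q + 2/3, and set W := W^{(3p−2)/q−1,q}(ℝ/ℤ,ℝⁿ). The set U of injective regular curves in W is open in W, the functional E_{p,q} is Gâteaux differentiable at every γ ∈ U with differential δE_{p,q}(γ;·) a bounded linear functional on W, and the map U → W*, γ ↦ δE_{p,q}(γ;·), is continuous; in other words, E_{p,q} is continuously differentiable on the subspace of all regular embedded W-curves. -/

import Mathlib

open MeasureTheory Set Filter Topology
open scoped ENNReal

noncomputable section

/-- The area `|a ∧ b|` of the parallelogram spanned by `a, b ∈ ℝⁿ`. -/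
def wedgeNorm {n : ℕ} (a b : EuclideanSpace ℝ (Fin n)) : ℝ :=
  Real.sqrt (‖a‖ ^ 2 * ‖b‖ ^ 2 - (inner ℝ a b : ℝ) ^ 2)

/-- `1 / R^{p,q}(x,y,z) = |(y-x) ∧ (z-x)|^q / (|y-z| |y-x| |z-x|)^p`. -/
def invR {n : ℕ} (p q : ℝ) (x y z : EuclideanSpace ℝ (Fin n)) : ℝ :=
  wedgeNorm (y - x) (z - x) ^ q / (‖y - z‖ * ‖y - x‖ * ‖z - x‖) ^ p

/-- The generalized integral Menger curvature `E_{p,q}` of a closed curve,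
modelled by a `1`-periodic function together with its derivative,
the parameter domain `ℝ/ℤ` being represented by `[0,1)`; values in `[0,∞]`. -/
def menger {n : ℕ} (p q : ℝ) (γ γ' : ℝ → EuclideanSpace ℝ (Fin n)) : ℝ≥0∞ :=
  ∫⁻ u₁ in Ico (0:ℝ) 1, ∫⁻ u₂ in Ico (0:ℝ) 1, ∫⁻ u₃ in Ico (0:ℝ) 1,
    ENNReal.ofReal (‖γ' u₁‖ * ‖γ' u₂‖ * ‖γ' u₃‖ * invR p q (γ u₁) (γ u₂) (γ u₃))

/-- Injectivity of a `1`-periodic curve as a map on `ℝ/ℤ`. -/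
def InjCircle {n : ℕ} (γ : ℝ → EuclideanSpace ℝ (Fin n)) : Prop :=
  ∀ u v : ℝ, γ u = γ v → ∃ k : ℤ, v = u + k

/-- Distance on `ℝ/ℤ`. -/
def circleDist (u v : ℝ) : ℝ := ⨅ k : ℤ, |u - v - (k : ℝ)|

/-- The `ρ`-th power of the Sobolev–Slobodeckiĭ seminorm `[f]_{W^{1+s,ρ}}`
of a periodic function with derivative `f'`; values in `[0,∞]`. -/
def sobSemiPow {n : ℕ} (s ρ : ℝ) (f' : ℝ → EuclideanSpace ℝ (Fin n)) : ℝ≥0∞ :=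
  ∫⁻ u in Ico (0:ℝ) 1, ∫⁻ w in Icc (-(1/2) : ℝ) (1/2),
    ENNReal.ofReal (‖f' (u + w) - f' u‖ ^ ρ / |w| ^ (1 + ρ * s))

/-- The norm `‖f‖_{W^{1+s,ρ}} = ‖f‖_{W^{1,ρ}} + [f]_{W^{1+s,ρ}}`. -/
def sobNorm {n : ℕ} (s ρ : ℝ) (f f' : ℝ → EuclideanSpace ℝ (Fin n)) : ℝ :=
  (∫ u in Ico (0:ℝ) 1, ‖f u‖ ^ ρ) ^ (1/ρ) + (∫ u in Ico (0:ℝ) 1, ‖f' u‖ ^ ρ) ^ (1/ρ)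
    + (sobSemiPow s ρ f').toReal ^ (1/ρ)

/-- `γ` is a closed `W^{1,1}` curve with weak derivative `γ'`:
both are `1`-periodic, `γ'` is measurable and `γ` is the primitive of `γ'`. -/
structure CurvePair {n : ℕ} (γ γ' : ℝ → EuclideanSpace ℝ (Fin n)) : Prop where
  periodic : Function.Periodic γ 1
  periodic' : Function.Periodic γ' 1
  meas' : Measurable γ'
  primitive : ∀ u, γ u = γ 0 + ∫ t in (0:ℝ)..u, γ' t

/-- Membership in the energy space `W^{1+s,ρ}(ℝ/ℤ,ℝⁿ)` of a curve with
(weak) derivative `f'`. -/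
def InW {n : ℕ} (s ρ : ℝ) (f f' : ℝ → EuclideanSpace ℝ (Fin n)) : Prop :=
  CurvePair f f' ∧ sobSemiPow s ρ f' < ⊤

/-- The set `U` of injective (embedded) regular curves in `W^{1+s,ρ}`. -/
def InU {n : ℕ} (s ρ : ℝ) (f f' : ℝ → EuclideanSpace ℝ (Fin n)) : Prop :=
  InW s ρ f f' ∧ InjCircle f ∧ ∃ c : ℝ, 0 < c ∧ ∀ᵐ u : ℝ, c ≤ ‖f' u‖

section Homogeneous

variable {Z V : Type*} [NormedAddCommGroup Z] [NormedSpace ℝ Z]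
  [NormedAddCommGroup V] [NormedSpace ℝ V]

theorem fderiv_smul_of_homogeneous {q : ℝ} {G : Z × V → ℝ} {ξ : Z}
    (hom : ∀ t : ℝ, 0 < t → ∀ ξ κ, G (ξ, t • κ) = t ^ q * G (ξ, κ))
    (hd : ∀ κ, DifferentiableAt ℝ G (ξ, κ)) {t : ℝ} (ht : 0 < t) (κ : V) (a : Z) (b : V) :
    fderiv ℝ G (ξ, t • κ) (a, t • b) = t ^ q * fderiv ℝ G (ξ, κ) (a, b) := by
  have h1 : HasFDerivAt (fun z : Z × V => ((z.1, t • z.2) : Z × V))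
      ((ContinuousLinearMap.fst ℝ Z V).prod (t • ContinuousLinearMap.snd ℝ Z V)) (ξ, κ) :=
    (ContinuousLinearMap.hasFDerivAt
      ((ContinuousLinearMap.fst ℝ Z V).prod (t • ContinuousLinearMap.snd ℝ Z V)))
  have h2 : HasFDerivAt (fun z : Z × V => G (z.1, t • z.2)) _ (ξ, κ) :=
    HasFDerivAt.comp (ξ, κ) (hd (t • κ)).hasFDerivAt h1
  have h3 : HasFDerivAt (fun z : Z × V => t ^ q * G z) (t ^ q • fderiv ℝ G (ξ, κ)) (ξ, κ) :=
    (hd κ).hasFDerivAt.const_mul _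
  have h4 : (fun z : Z × V => G (z.1, t • z.2)) = fun z => t ^ q * G z := by
    funext z; exact hom t ht z.1 z.2
  rw [h4] at h2
  have := congrArg (fun L : Z × V →L[ℝ] ℝ => L (a, b)) (h2.unique h3)
  simpa using this

theorem fderiv_zero_of_homogeneous {q : ℝ} (hq : 1 < q) {G : Z × V → ℝ} {ξ : Z}
    (hom : ∀ t : ℝ, 0 < t → ∀ ξ κ, G (ξ, t • κ) = t ^ q * G (ξ, κ))
    (hd : ∀ κ, DifferentiableAt ℝ G (ξ, κ)) : fderiv ℝ G (ξ, 0) = 0 := by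
  have h2q : (2 : ℝ) < 2 ^ q := by
    conv_lhs => rw [← Real.rpow_one 2]
    exact Real.rpow_lt_rpow_of_exponent_lt (by norm_num) hq
  have key := fun a b => fderiv_smul_of_homogeneous (q := q) hom hd (t := 2) two_pos (0 : V) a b
  simp only [smul_zero] at key
  have ha : ∀ a, fderiv ℝ G (ξ, 0) (a, 0) = 0 := by
    intro a
    have := key a 0
    rw [smul_zero] at this
    have h : (2 ^ q - 1) * fderiv ℝ G (ξ, 0) (a, 0) = 0 := by linarith
    rcases mul_eq_zero.1 h with h | h
    · linarith
    · exact h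
  have hb : ∀ b, fderiv ℝ G (ξ, 0) (0, b) = 0 := by
    intro b
    have := key 0 b
    have e : ((0 : Z), (2 : ℝ) • b) = (2 : ℝ) • ((0 : Z), b) := by simp
    rw [e, map_smul, smul_eq_mul] at this
    have h : (2 ^ q - 2) * fderiv ℝ G (ξ, 0) (0, b) = 0 := by linarith
    rcases mul_eq_zero.1 h with h | h
    · linarith
    · exact h
  ext z
  · simpa using ha z
  · simpa using hb z

theorem rpow_mul_add_div {q t : ℝ} (ht : 0 < t) (C x y : ℝ) :
    t ^ q * (C * (x + y / t)) = C * (t ^ q * x + t ^ (q - 1) * y) := by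
  rw [Real.rpow_sub_one ht.ne']; ring

/-- Growth of the derivative of a `C¹` function which is `q`-homogeneous in its second variable. -/
theorem exists_fderiv_bound_of_homogeneous {q : ℝ} (hq : 1 < q) [ProperSpace V] {G : Z × V → ℝ}
    {K : Set Z} (hK : IsCompact K)
    (hom : ∀ t : ℝ, 0 < t → ∀ ξ κ, G (ξ, t • κ) = t ^ q * G (ξ, κ))
    (hd : ∀ ξ ∈ K, ∀ κ, DifferentiableAt ℝ G (ξ, κ))
    (hc : ContinuousOn (fderiv ℝ G) (K ×ˢ univ)) :
    ∃ C, 0 ≤ C ∧ ∀ ξ ∈ K, ∀ κ a b,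
      |fderiv ℝ G (ξ, κ) (a, b)| ≤ C * (‖κ‖ ^ q * ‖a‖ + ‖κ‖ ^ (q - 1) * ‖b‖) := by
  have hcomp : IsCompact (K ×ˢ Metric.closedBall (0 : V) 1) :=
    hK.prod (isCompact_closedBall _ _)
  obtain ⟨C, hC⟩ := hcomp.exists_bound_of_continuousOn
    (hc.mono (prod_mono Subset.rfl (subset_univ _)))
  refine ⟨max C 0, le_max_right _ _, fun ξ hξ κ a b => ?_⟩
  rcases eq_or_ne κ 0 with rfl | hκ
  · rw [fderiv_zero_of_homogeneous hq hom (hd ξ hξ)]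
    simp [Real.zero_rpow (by linarith : q ≠ 0), Real.zero_rpow (by linarith : q - 1 ≠ 0)]
  have ht : 0 < ‖κ‖ := norm_pos_iff.2 hκ
  have h := fderiv_smul_of_homogeneous hom (hd ξ hξ) ht (‖κ‖⁻¹ • κ) a (‖κ‖⁻¹ • b)
  rw [smul_inv_smul₀ ht.ne', smul_inv_smul₀ ht.ne'] at h
  rw [h, abs_mul, abs_of_pos (Real.rpow_pos_of_pos ht q), ← rpow_mul_add_div ht]
  gcongr
  have hmem : (ξ, ‖κ‖⁻¹ • κ) ∈ K ×ˢ Metric.closedBall (0 : V) 1 := by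
    refine ⟨hξ, ?_⟩
    simp [norm_smul, ht.ne']
  calc |fderiv ℝ G (ξ, ‖κ‖⁻¹ • κ) (a, ‖κ‖⁻¹ • b)|
      ≤ ‖fderiv ℝ G (ξ, ‖κ‖⁻¹ • κ)‖ * ‖(a, ‖κ‖⁻¹ • b)‖ :=
        (fderiv ℝ G (ξ, ‖κ‖⁻¹ • κ)).le_opNorm _
    _ ≤ max C 0 * (‖a‖ + ‖b‖ / ‖κ‖) := by
        gcongr
        · exact (hC _ hmem).trans (le_max_left _ _)
        · rw [Prod.norm_mk, norm_smul, norm_inv, norm_norm, inv_mul_eq_div]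
          exact max_le_add_of_nonneg (norm_nonneg _) (by positivity)

/-- Modulus of continuity of the derivative of a `C¹` function which is `q`-homogeneous in its
second variable. -/
theorem exists_fderiv_sub_bound_of_homogeneous {q : ℝ} (hq : 1 < q) [ProperSpace V]
    {G : Z × V → ℝ} {K : Set Z} (hK : IsCompact K)
    (hom : ∀ t : ℝ, 0 < t → ∀ ξ κ, G (ξ, t • κ) = t ^ q * G (ξ, κ))
    (hd : ∀ ξ ∈ K, ∀ κ, DifferentiableAt ℝ G (ξ, κ))
    (hc : ContinuousOn (fderiv ℝ G) (K ×ˢ univ)) {ε : ℝ} (hε : 0 < ε) :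
    ∃ δ, 0 < δ ∧ ∃ C, 0 ≤ C ∧ ∀ ξ ∈ K, ∀ ξ' ∈ K, ‖ξ' - ξ‖ < δ → ∀ κ κ' a b,
      |fderiv ℝ G (ξ', κ') (a, b) - fderiv ℝ G (ξ, κ) (a, b)| ≤
        ε * (‖κ‖ ^ q * ‖a‖ + ‖κ‖ ^ (q - 1) * ‖b‖) +
        C * (‖κ' - κ‖ ^ q * ‖a‖ + ‖κ' - κ‖ ^ (q - 1) * ‖b‖) := by
  obtain ⟨C, hC0, hC⟩ := exists_fderiv_bound_of_homogeneous hq hK hom hd hc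
  have hcomp : IsCompact (K ×ˢ Metric.closedBall (0 : V) 2) :=
    hK.prod (isCompact_closedBall _ _)
  have huc := hcomp.uniformContinuousOn_of_continuous
    (hc.mono (prod_mono Subset.rfl (subset_univ _)))
  obtain ⟨δ₀, hδ₀, huc⟩ := Metric.uniformContinuousOn_iff.1 huc ε hε
  set δ := min (δ₀ / 2) 1 with hδdef
  have hδ : 0 < δ := lt_min (by linarith) one_pos
  have hδ1 : δ ≤ 1 := min_le_right _ _
  have hδ2 : δ < δ₀ := (min_le_left _ _).trans_lt (by linarith)
  set B := (1 + 1 / δ) with hB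
  have hB0 : 0 < B := by positivity
  refine ⟨δ, hδ, C * (B ^ q + B ^ (q - 1)) * 2, by positivity,
    fun ξ hξ ξ' hξ' hξξ κ κ' a b => ?_⟩
  by_cases hcase : ‖κ' - κ‖ ≤ δ * ‖κ‖
  · have hextra : 0 ≤ C * (B ^ q + B ^ (q - 1)) * 2 *
        (‖κ' - κ‖ ^ q * ‖a‖ + ‖κ' - κ‖ ^ (q - 1) * ‖b‖) := by positivity
    refine le_trans ?_ (le_add_of_nonneg_right hextra)
    rcases eq_or_ne κ 0 with rfl | hκ
    · have : κ' = 0 := by simpa using hcase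
      rw [this, fderiv_zero_of_homogeneous hq hom (hd ξ hξ),
        fderiv_zero_of_homogeneous hq hom (hd ξ' hξ')]
      simp [Real.zero_rpow (by linarith : q ≠ 0), Real.zero_rpow (by linarith : q - 1 ≠ 0)]
    have ht : 0 < ‖κ‖ := norm_pos_iff.2 hκ
    have h := fderiv_smul_of_homogeneous hom (hd ξ hξ) ht (‖κ‖⁻¹ • κ) a (‖κ‖⁻¹ • b)
    have h' := fderiv_smul_of_homogeneous hom (hd ξ' hξ') ht (‖κ‖⁻¹ • κ') a (‖κ‖⁻¹ • b)
    rw [smul_inv_smul₀ ht.ne', smul_inv_smul₀ ht.ne'] at h h'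
    rw [h, h', ← mul_sub, abs_mul, abs_of_pos (Real.rpow_pos_of_pos ht q), ← rpow_mul_add_div ht,
      ← sub_apply]
    gcongr
    have hdiff : ‖‖κ‖⁻¹ • κ' - ‖κ‖⁻¹ • κ‖ ≤ δ := by
      rw [← smul_sub, norm_smul, norm_inv, norm_norm, inv_mul_eq_div, div_le_iff₀ ht]
      exact hcase
    have hone : ‖‖κ‖⁻¹ • κ‖ = 1 := by simp [norm_smul, ht.ne']
    have hmem : (ξ, ‖κ‖⁻¹ • κ) ∈ K ×ˢ Metric.closedBall (0 : V) 2 := by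
      refine ⟨hξ, ?_⟩
      rw [mem_closedBall_zero_iff, hone]; norm_num
    have hmem' : (ξ', ‖κ‖⁻¹ • κ') ∈ K ×ˢ Metric.closedBall (0 : V) 2 := by
      refine ⟨hξ', ?_⟩
      rw [mem_closedBall_zero_iff]
      have := norm_le_norm_add_norm_sub (‖κ‖⁻¹ • κ) (‖κ‖⁻¹ • κ')
      linarith [norm_sub_rev (‖κ‖⁻¹ • κ) (‖κ‖⁻¹ • κ')]
    have hlt := huc _ hmem' _ hmem (by
      rw [Prod.dist_eq, dist_eq_norm, dist_eq_norm]
      exact max_lt (hξξ.trans hδ2) (hdiff.trans_lt hδ2))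
    rw [dist_eq_norm] at hlt
    calc _ ≤ ‖fderiv ℝ G (ξ', ‖κ‖⁻¹ • κ') - fderiv ℝ G (ξ, ‖κ‖⁻¹ • κ)‖ * ‖(a, ‖κ‖⁻¹ • b)‖ :=
          ContinuousLinearMap.le_opNorm _ _
      _ ≤ ε * (‖a‖ + ‖b‖ / ‖κ‖) := by
        gcongr
        rw [Prod.norm_mk, norm_smul, norm_inv, norm_norm, inv_mul_eq_div]
        exact max_le_add_of_nonneg (norm_nonneg _) (by positivity)
  · push Not at hcase
    have hextra : 0 ≤ ε * (‖κ‖ ^ q * ‖a‖ + ‖κ‖ ^ (q - 1) * ‖b‖) := by positivity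
    refine le_trans ?_ (le_add_of_nonneg_left hextra)
    have h1 : ‖κ‖ ≤ B * ‖κ' - κ‖ := by
      have : ‖κ‖ ≤ 1 / δ * ‖κ' - κ‖ := by
        rw [one_div, inv_mul_eq_div, le_div_iff₀ hδ]; linarith
      have := norm_nonneg (κ' - κ)
      rw [hB]; nlinarith
    have h2 : ‖κ'‖ ≤ B * ‖κ' - κ‖ := by
      have : ‖κ‖ ≤ 1 / δ * ‖κ' - κ‖ := by
        rw [one_div, inv_mul_eq_div, le_div_iff₀ hδ]; linarith
      have h3 : ‖κ'‖ ≤ ‖κ‖ + ‖κ' - κ‖ := by simpa using norm_add_le κ (κ' - κ)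
      rw [hB, add_mul, one_mul]; linarith
    have aux : ∀ ξ₀ ∈ K, ∀ κ₀, ‖κ₀‖ ≤ B * ‖κ' - κ‖ → |fderiv ℝ G (ξ₀, κ₀) (a, b)| ≤
        C * (B ^ q + B ^ (q - 1)) * (‖κ' - κ‖ ^ q * ‖a‖ + ‖κ' - κ‖ ^ (q - 1) * ‖b‖) := by
      intro ξ₀ hξ₀ κ₀ hκ₀
      refine (hC ξ₀ hξ₀ κ₀ a b).trans ?_
      rw [mul_assoc]
      gcongr
      have e1 : ‖κ₀‖ ^ q ≤ B ^ q * ‖κ' - κ‖ ^ q := by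
        rw [← Real.mul_rpow hB0.le (norm_nonneg _)]
        exact Real.rpow_le_rpow (norm_nonneg _) hκ₀ (by linarith)
      have e2 : ‖κ₀‖ ^ (q - 1) ≤ B ^ (q - 1) * ‖κ' - κ‖ ^ (q - 1) := by
        rw [← Real.mul_rpow hB0.le (norm_nonneg _)]
        exact Real.rpow_le_rpow (norm_nonneg _) hκ₀ (by linarith)
      calc _ ≤ B ^ q * ‖κ' - κ‖ ^ q * ‖a‖ + B ^ (q - 1) * ‖κ' - κ‖ ^ (q - 1) * ‖b‖ := by gcongr
        _ ≤ _ := by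
          have : 0 ≤ B ^ q * (‖κ' - κ‖ ^ (q - 1) * ‖b‖) := by positivity
          have : 0 ≤ B ^ (q - 1) * (‖κ' - κ‖ ^ q * ‖a‖) := by positivity
          nlinarith
    have e := abs_sub (fderiv ℝ G (ξ', κ') (a, b)) (fderiv ℝ G (ξ, κ) (a, b))
    linarith [aux ξ hξ κ h1, aux ξ' hξ' κ' h2]

end Homogeneous

section NormShell

variable {V : Type*} [NormedAddCommGroup V]

/-- Six-tuples of vectors with norms in `[c, M]`. -/
def normShell (V : Type*) [NormedAddCommGroup V] (c M : ℝ) : Set (Fin 6 → V) :=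
  {ξ | ∀ i, c ≤ ‖ξ i‖ ∧ ‖ξ i‖ ≤ M}

theorem isCompact_normShell [ProperSpace V] (c M : ℝ) : IsCompact (normShell V c M) := by
  refine Metric.isCompact_of_isClosed_isBounded ?_ ?_
  · simp only [normShell, ofPred_forall, ofPred_and]
    refine isClosed_iInter fun i => IsClosed.inter ?_ ?_
    · exact isClosed_le continuous_const (continuous_apply i).norm
    · exact isClosed_le (continuous_apply i).norm continuous_const
  · refine (Metric.isBounded_closedBall (x := (0 : Fin 6 → V)) (r := max M 0)).subset ?_
    intro ξ hξ
    rw [mem_closedBall_zero_iff, pi_norm_le_iff_of_nonneg (le_max_right _ _)]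
    exact fun i => (hξ i).2.trans (le_max_left _ _)

theorem ne_zero_of_mem_normShell {c M : ℝ} (hc : 0 < c) {ξ : Fin 6 → V}
    (hξ : ξ ∈ normShell V c M) (i : Fin 6) : ξ i ≠ 0 :=
  norm_pos_iff.1 (hc.trans_le (hξ i).1)

end NormShell

section Density

variable {V : Type*} [NormedAddCommGroup V] [InnerProductSpace ℝ V]

/-- `|P|` times the component of `κ` orthogonal to `P`. -/
def scaledRejection (P κ : V) : V := ‖P‖ • κ - (inner ℝ P κ / ‖P‖ : ℝ) • P

theorem norm_scaledRejection {P : V} (hP : P ≠ 0) (κ : V) :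
    ‖scaledRejection P κ‖ = Real.sqrt (‖P‖ ^ 2 * ‖κ‖ ^ 2 - (inner ℝ P κ : ℝ) ^ 2) := by
  have hP' : ‖P‖ ≠ 0 := norm_ne_zero_iff.2 hP
  rw [← Real.sqrt_sq (norm_nonneg (scaledRejection P κ))]
  congr 1
  rw [scaledRejection, norm_sub_sq_real, norm_smul, norm_smul, inner_smul_left, inner_smul_right,
    norm_norm, Real.norm_eq_abs, mul_pow, mul_pow, sq_abs, real_inner_comm κ P]
  simp only [conj_trivial]
  field_simp
  ring

/-- The Menger integrand in terms of derivatives, difference quotients and a weighted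
second difference quotient. -/
def mengerDensity (p q : ℝ) (z : (Fin 6 → V) × V) : ℝ :=
  ‖z.1 0‖ * ‖z.1 1‖ * ‖z.1 2‖ * ‖scaledRejection (z.1 3) z.2‖ ^ q
    / (‖z.1 3‖ * ‖z.1 4‖ * ‖z.1 5‖) ^ p

theorem mengerDensity_nonneg (p q : ℝ) (z : (Fin 6 → V) × V) : 0 ≤ mengerDensity p q z := by
  unfold mengerDensity; positivity

theorem mengerDensity_smul (p q : ℝ) (t : ℝ) (ht : 0 < t) (ξ : Fin 6 → V) (κ : V) :
    mengerDensity p q (ξ, t • κ) = t ^ q * mengerDensity p q (ξ, κ) := by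
  have h : scaledRejection (ξ 3) (t • κ) = t • scaledRejection (ξ 3) κ := by
    simp only [scaledRejection, inner_smul_right, smul_sub, smul_smul]
    congr 2 <;> ring
  simp only [mengerDensity, h, norm_smul, Real.norm_of_nonneg ht.le,
    Real.mul_rpow ht.le (norm_nonneg _)]
  ring

theorem contDiffAt_mengerDensity {p q : ℝ} (hq : 1 < q) {z : (Fin 6 → V) × V}
    (hz : ∀ i, z.1 i ≠ 0) : ContDiffAt ℝ 1 (mengerDensity p q) z := by
  have hcoord : ∀ i : Fin 6, ContDiffAt ℝ 1 (fun z : (Fin 6 → V) × V => z.1 i) z := fun i => by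
    fun_prop
  have hnorm : ∀ i : Fin 6, ContDiffAt ℝ 1 (fun z : (Fin 6 → V) × V => ‖z.1 i‖) z := fun i =>
    (hcoord i).norm ℝ (hz i)
  have hrej : ContDiffAt ℝ 1 (fun z : (Fin 6 → V) × V => scaledRejection (z.1 3) z.2) z := by
    unfold scaledRejection
    refine ((hnorm 3).smul contDiffAt_snd).sub (ContDiffAt.smul ?_ (hcoord 3))
    exact ((hcoord 3).inner ℝ contDiffAt_snd).div (hnorm 3) (norm_ne_zero_iff.2 (hz 3))
  have hpow : ContDiffAt ℝ 1
      (fun z : (Fin 6 → V) × V => ‖scaledRejection (z.1 3) z.2‖ ^ q) z :=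
    ContDiffAt.comp z (contDiff_norm_rpow hq).contDiffAt hrej
  have hprod : ‖z.1 3‖ * ‖z.1 4‖ * ‖z.1 5‖ ≠ 0 := by
    simp [hz]
  have hden : ContDiffAt ℝ 1 (fun z : (Fin 6 → V) × V => (‖z.1 3‖ * ‖z.1 4‖ * ‖z.1 5‖) ^ p) z :=
    (((hnorm 3).mul (hnorm 4)).mul (hnorm 5)).rpow_const_of_ne hprod
  have hpos : 0 < ‖z.1 3‖ * ‖z.1 4‖ * ‖z.1 5‖ := lt_of_le_of_ne (by positivity) hprod.symm
  exact ((((hnorm 0).mul (hnorm 1)).mul (hnorm 2)).mul hpow).div hden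
    (Real.rpow_pos_of_pos hpos p).ne'

theorem continuousOn_fderiv_mengerDensity {p q : ℝ} (hq : 1 < q) :
    ContinuousOn (fderiv ℝ (mengerDensity (V := V) p q)) {z | ∀ i, z.1 i ≠ 0} := by
  intro z hz
  have h := contDiffAt_mengerDensity (p := p) hq hz
  exact (h.fderiv_right (m := 0) (by norm_num)).continuousAt.continuousWithinAt

theorem differentiableAt_mengerDensity {p q : ℝ} (hq : 1 < q) {c M : ℝ} (hc : 0 < c)
    {ξ : Fin 6 → V} (hξ : ξ ∈ normShell V c M) (κ : V) :
    DifferentiableAt ℝ (mengerDensity p q) (ξ, κ) :=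
  (contDiffAt_mengerDensity hq
    (z := (ξ, κ)) (ne_zero_of_mem_normShell hc hξ)).differentiableAt one_ne_zero

theorem exists_fderiv_mengerDensity_bound [ProperSpace V] (p : ℝ) {q : ℝ} (hq : 1 < q) {c : ℝ}
    (hc : 0 < c) (M : ℝ) :
    ∃ C, 0 ≤ C ∧ ∀ ξ ∈ normShell V c M, ∀ κ a b,
      |fderiv ℝ (mengerDensity p q) (ξ, κ) (a, b)| ≤
        C * (‖κ‖ ^ q * ‖a‖ + ‖κ‖ ^ (q - 1) * ‖b‖) :=
  exists_fderiv_bound_of_homogeneous hq (isCompact_normShell c M) (mengerDensity_smul p q)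
    (fun _ hξ κ => differentiableAt_mengerDensity hq hc hξ κ)
    ((continuousOn_fderiv_mengerDensity hq).mono
      fun _ hz => ne_zero_of_mem_normShell hc hz.1)

theorem exists_fderiv_mengerDensity_sub_bound [ProperSpace V] (p : ℝ) {q : ℝ} (hq : 1 < q) {c : ℝ}
    (hc : 0 < c) (M : ℝ) {ε : ℝ} (hε : 0 < ε) :
    ∃ δ, 0 < δ ∧ ∃ C, 0 ≤ C ∧ ∀ ξ ∈ normShell V c M, ∀ ξ' ∈ normShell V c M, ‖ξ' - ξ‖ < δ →
      ∀ κ κ' a b, |fderiv ℝ (mengerDensity p q) (ξ', κ') (a, b)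
          - fderiv ℝ (mengerDensity p q) (ξ, κ) (a, b)| ≤
        ε * (‖κ‖ ^ q * ‖a‖ + ‖κ‖ ^ (q - 1) * ‖b‖) +
        C * (‖κ' - κ‖ ^ q * ‖a‖ + ‖κ' - κ‖ ^ (q - 1) * ‖b‖) :=
  exists_fderiv_sub_bound_of_homogeneous (G := mengerDensity p q) (K := normShell V c M) hq
    (isCompact_normShell c M) (mengerDensity_smul p q)
    (fun _ hξ κ => differentiableAt_mengerDensity hq hc hξ κ)
    ((continuousOn_fderiv_mengerDensity hq).mono
      fun _ hz => ne_zero_of_mem_normShell hc hz.1) hε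

end Density

section Periodic

theorem setLIntegral_Ico_eq_of_periodic {f : ℝ → ℝ≥0∞} (hf : Function.Periodic f 1) (a b : ℝ) :
    ∫⁻ x in Ico a (a + 1), f x = ∫⁻ x in Ico b (b + 1), f x := by
  rw [setLIntegral_congr Ico_ae_eq_Ioc, setLIntegral_congr (μ := volume) (s := Ico b (b + 1))
    Ico_ae_eq_Ioc]
  refine (isAddFundamentalDomain_Ioc one_pos a).setLIntegral_eq
    (isAddFundamentalDomain_Ioc one_pos b) f fun g x => ?_
  obtain ⟨k, hk⟩ := AddSubgroup.mem_zmultiples_iff.1 g.2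
  have : g +ᵥ x = x + k • (1 : ℝ) := by
    rw [AddSubgroup.vadd_def, ← hk, vadd_eq_add, add_comm]
  rw [this]
  exact (hf.zsmul k) x

theorem setLIntegral_Ico_comp_add (f : ℝ → ℝ≥0∞) (a b c : ℝ) :
    ∫⁻ x in Ico a b, f (x + c) = ∫⁻ x in Ico (a + c) (b + c), f x := by
  have h := (measurePreserving_add_right (volume : Measure ℝ) c).setLIntegral_comp_preimage_emb
    (measurableEmbedding_addRight c) f (Ico (a + c) (b + c))
  rw [← h]
  simp

theorem setLIntegral_Ico_comp_add_of_periodic {f : ℝ → ℝ≥0∞} (hf : Function.Periodic f 1) (c : ℝ) :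
    ∫⁻ x in Ico (0 : ℝ) 1, f (x + c) = ∫⁻ x in Ico (0 : ℝ) 1, f x := by
  rw [setLIntegral_Ico_comp_add, zero_add, add_comm 1 c, setLIntegral_Ico_eq_of_periodic hf c 0,
    zero_add]

end Periodic

section Symmetrization

/-- Pairs `(a, b)` of arc lengths such that the third arc of the circle, of length `1 - a - b`, is
the longest one. -/
def arcDomain : Set (ℝ × ℝ) :=
  {d | 0 < d.1 ∧ 0 < d.2 ∧ 2 * d.1 + d.2 < 1 ∧ d.1 + 2 * d.2 < 1}

theorem measurableSet_arcDomain : MeasurableSet arcDomain := by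
  unfold arcDomain
  measurability

/-- Lebesgue measure on the configurations `(u, a, b)` of a middle point `u` and two arcs. -/
def arcMeasure : Measure (ℝ × ℝ × ℝ) :=
  (volume.restrict (Ico (0 : ℝ) 1)).prod (volume.restrict arcDomain)

theorem volume_line_eq_zero (α c : ℝ) {β : ℝ} (hβ : β ≠ 0) :
    volume {d : ℝ × ℝ | α * d.1 + β * d.2 = c} = 0 := by
  have hm : MeasurableSet {d : ℝ × ℝ | α * d.1 + β * d.2 = c} :=
    measurableSet_eq_fun (by fun_prop) (by fun_prop)
  rw [Measure.volume_eq_prod, Measure.measure_prod_null hm]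
  refine Eventually.of_forall fun x => ?_
  refine Set.Subsingleton.measure_zero (fun y hy z hz => ?_) _
  simp only [mem_preimage, mem_ofPred_eq] at hy hz
  exact mul_left_cancel₀ hβ (by linarith)

theorem ae_line_ne (α c : ℝ) {β : ℝ} (hβ : β ≠ 0) :
    ∀ᵐ d : ℝ × ℝ, α * d.1 + β * d.2 ≠ c := by
  rw [ae_iff]
  simpa using volume_line_eq_zero α c hβ

theorem measurePreserving_arcs_left :
    MeasurePreserving (fun d : ℝ × ℝ => (d.2 - d.1, d.1)) := by
  have := Measure.measurePreserving_swap.comp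
    (measurePreserving_prod_sub (volume : Measure ℝ) (volume : Measure ℝ))
  exact this

theorem measurePreserving_arcs_middle :
    MeasurePreserving (fun d : ℝ × ℝ => (d.1, 1 - d.2)) :=
  (MeasurePreserving.id volume).prod (volume.measurePreserving_sub_left 1)

theorem measurePreserving_arcs_right :
    MeasurePreserving (fun d : ℝ × ℝ => (1 - d.2, d.2 - d.1)) := by
  have h := (measurePreserving_prod_sub (volume : Measure ℝ) (volume : Measure ℝ)).comp
    (measurePreserving_arcs_middle.comp
      (Measure.measurePreserving_swap.comp measurePreserving_arcs_middle))
  have e : (fun d : ℝ × ℝ => (1 - d.2, d.2 - d.1)) =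
      (fun z : ℝ × ℝ => (z.1, z.2 - z.1)) ∘ (fun d : ℝ × ℝ => (d.1, 1 - d.2)) ∘ Prod.swap ∘
        fun d : ℝ × ℝ => (d.1, 1 - d.2) := by
    funext d
    simp
  rw [e]
  exact h

/-- The open upper triangle in the unit square. -/
def upperTriangle : Set (ℝ × ℝ) := {d | 0 < d.1 ∧ d.1 < d.2 ∧ d.2 < 1}

theorem measurableSet_upperTriangle : MeasurableSet upperTriangle :=
  (measurableSet_lt measurable_const measurable_fst).inter
    ((measurableSet_lt measurable_fst measurable_snd).inter
      (measurableSet_lt measurable_snd measurable_const))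

theorem indicator_apply_eq_ite {α β : Type*} [Zero β] {S : Set α} {f : α → β} {x : α} {P : Prop}
    [Decidable P] (h : x ∈ S ↔ P) : S.indicator f x = if P then f x else 0 := by
  classical
  rw [indicator_apply]
  exact if_congr h rfl rfl

theorem setLIntegral_upper_triangle {H : ℝ × ℝ → ℝ≥0∞} (hH : Measurable H)
    (hswap : ∀ v w, H (v, w) = H (w, v)) (hrot : ∀ v w, H (v, w) = H (-v, w - v))
    (hper : ∀ v w, H (v, w + 1) = H (v, w)) :
    ∫⁻ d in upperTriangle, H d =
      3 * ∫⁻ d in arcDomain, H (d.1, -d.2) := by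
  set K : ℝ × ℝ → ℝ≥0∞ := fun d => H (d.1, -d.2) with hK
  have hKm : Measurable K := hH.comp (by fun_prop)
  have key : ∀ φ : ℝ × ℝ → ℝ × ℝ, MeasurePreserving φ → (∀ d, K (φ d) = H d) →
      ∫⁻ d in φ ⁻¹' arcDomain, H d = ∫⁻ d in arcDomain, K d := by
    intro φ hφ h
    rw [← hφ.setLIntegral_comp_preimage measurableSet_arcDomain hKm]
    simp only [h]
  have h1 := key _ measurePreserving_arcs_left fun d => by
    simp only [hK]
    rw [hswap, ← hrot]
  have h2 := key _ measurePreserving_arcs_middle fun d => by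
    simp only [hK]
    rw [← hper, neg_sub, sub_add_cancel]
  have h3 := key _ measurePreserving_arcs_right fun d => by
    simp only [hK]
    rw [hswap, neg_sub, show 1 - d.2 = -d.2 + 1 by ring, hper, hswap, ← hrot, hswap]
  have hm : ∀ φ : ℝ × ℝ → ℝ × ℝ, MeasurePreserving φ → MeasurableSet (φ ⁻¹' arcDomain) :=
    fun φ hφ => hφ.measurable measurableSet_arcDomain
  have m0 := measurableSet_upperTriangle
  have m1 := hm _ measurePreserving_arcs_left
  have m2 := hm _ measurePreserving_arcs_middle
  have m3 := hm _ measurePreserving_arcs_right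
  have hsum : (3 : ℝ≥0∞) * ∫⁻ d in arcDomain, K d =
      (∫⁻ d in arcDomain, K d) + (∫⁻ d in arcDomain, K d) + (∫⁻ d in arcDomain, K d) := by ring
  rw [hsum]
  nth_rewrite 1 [← h1]
  nth_rewrite 1 [← h2]
  rw [← h3, ← lintegral_indicator m0, ← lintegral_indicator m1, ← lintegral_indicator m2,
    ← lintegral_indicator m3, ← lintegral_add_left (hH.indicator m1),
    ← lintegral_add_left (by exact (hH.indicator m1).add (hH.indicator m2))]
  refine lintegral_congr_ae ?_
  filter_upwards [ae_line_ne (-2) 0 (one_ne_zero (α := ℝ)),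
    ae_line_ne (-1) 1 (two_ne_zero (α := ℝ)), ae_line_ne 1 1 (one_ne_zero (α := ℝ))] with d l1 l2 l3
  obtain ⟨v, w⟩ := d
  replace l1 : w ≠ 2 * v := fun h => l1 (by simp only [h]; ring)
  replace l2 : 2 * w ≠ v + 1 := fun h => l2 (by simp only; linarith)
  replace l3 : w ≠ 1 - v := fun h => l3 (by simp only [h]; ring)
  rw [indicator_apply_eq_ite (S := upperTriangle) (x := (v, w))
      (P := 0 < v ∧ v < w ∧ w < 1) Iff.rfl,
    indicator_apply_eq_ite
      (S := (fun d : ℝ × ℝ => (d.2 - d.1, d.1)) ⁻¹' arcDomain) (x := (v, w))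
      (P := 0 < w - v ∧ 0 < v ∧ 2 * (w - v) + v < 1 ∧ (w - v) + 2 * v < 1) Iff.rfl,
    indicator_apply_eq_ite
      (S := (fun d : ℝ × ℝ => (d.1, 1 - d.2)) ⁻¹' arcDomain) (x := (v, w))
      (P := 0 < v ∧ 0 < 1 - w ∧ 2 * v + (1 - w) < 1 ∧ v + 2 * (1 - w) < 1) Iff.rfl,
    indicator_apply_eq_ite (S := (fun d : ℝ × ℝ => (1 - d.2, d.2 - d.1)) ⁻¹' arcDomain) (x := (v, w))
      (P := 0 < 1 - w ∧ 0 < w - v ∧ 2 * (1 - w) + (w - v) < 1 ∧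
      (1 - w) + 2 * (w - v) < 1) Iff.rfl]
  generalize H (v, w) = y
  clear * - l1 l2 l3
  split_ifs <;> first | (simp; done) | (exfalso; grind)

theorem setLIntegral_square_eq_arcDomain {H : ℝ × ℝ → ℝ≥0∞} (hH : Measurable H)
    (hswap : ∀ v w, H (v, w) = H (w, v)) (hrot : ∀ v w, H (v, w) = H (-v, w - v))
    (hper : ∀ v w, H (v, w + 1) = H (v, w)) :
    ∫⁻ d in Ico (0 : ℝ) 1 ×ˢ Ico (0 : ℝ) 1, H d = 6 * ∫⁻ d in arcDomain, H (d.1, -d.2) := by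
  have h1 := setLIntegral_upper_triangle hH hswap hrot hper
  have m0 := measurableSet_upperTriangle
  have h2 := (Measure.measurePreserving_swap (μ := (volume : Measure ℝ))
    (ν := (volume : Measure ℝ))).setLIntegral_comp_preimage m0 hH
  rw [← Measure.volume_eq_prod] at h2
  have hsw : ∀ d : ℝ × ℝ, H d.swap = H d := fun d => hswap _ _
  simp only [hsw] at h2
  have hsum : (6 : ℝ≥0∞) * ∫⁻ d in arcDomain, H (d.1, -d.2) =
      3 * (∫⁻ d in arcDomain, H (d.1, -d.2)) + 3 * (∫⁻ d in arcDomain, H (d.1, -d.2)) := by ring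
  have m3 : MeasurableSet
      (Prod.swap ⁻¹' upperTriangle) := measurable_swap m0
  have hae : Ico (0 : ℝ) 1 ×ˢ Ico (0 : ℝ) 1 =ᵐ[volume] Ioo (0 : ℝ) 1 ×ˢ Ioo (0 : ℝ) 1 := by
    rw [Measure.volume_eq_prod]
    exact Measure.set_prod_ae_eq Ioo_ae_eq_Ico.symm Ioo_ae_eq_Ico.symm
  rw [hsum, ← h1]
  nth_rewrite 2 [← h2]
  rw [setLIntegral_congr hae, ← lintegral_indicator m0, ← lintegral_indicator m3,
    ← lintegral_indicator (measurableSet_Ioo.prod measurableSet_Ioo),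
    ← lintegral_add_left (hH.indicator m0)]
  refine lintegral_congr_ae ?_
  filter_upwards [ae_line_ne (-1) 0 (one_ne_zero (α := ℝ))] with d l1
  obtain ⟨v, w⟩ := d
  replace l1 : w ≠ v := fun h => l1 (by simp only [h]; ring)
  rw [indicator_apply_eq_ite (S := Ioo (0 : ℝ) 1 ×ˢ Ioo (0 : ℝ) 1) (x := (v, w))
      (P := (0 < v ∧ v < 1) ∧ 0 < w ∧ w < 1) Iff.rfl,
    indicator_apply_eq_ite (S := upperTriangle) (x := (v, w))
      (P := 0 < v ∧ v < w ∧ w < 1) Iff.rfl,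
    indicator_apply_eq_ite (S := Prod.swap ⁻¹' upperTriangle) (x := (v, w))
      (P := 0 < w ∧ w < v ∧ v < 1) Iff.rfl]
  generalize H (v, w) = y
  clear * - l1
  split_ifs <;> first | (simp; done) | (exfalso; grind)

/-- A triple integral of a symmetric function over the torus, reduced to triples whose first point
is separated from the longest arc. -/
theorem lintegral_torus_eq_arcMeasure {F : ℝ → ℝ → ℝ → ℝ≥0∞}
    (hF : Measurable fun x : ℝ × ℝ × ℝ => F x.1 x.2.1 x.2.2)
    (hper : ∀ x y, Function.Periodic (F x y) 1) (h12 : ∀ x y z, F x y z = F y x z)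
    (h23 : ∀ x y z, F x y z = F x z y) :
    ∫⁻ u in Ico (0 : ℝ) 1, ∫⁻ v in Ico (0 : ℝ) 1, ∫⁻ w in Ico (0 : ℝ) 1, F u v w =
      6 * ∫⁻ x, F x.1 (x.1 + x.2.1) (x.1 - x.2.2) ∂arcMeasure := by
  have hper2 : ∀ x y z, F x (y + 1) z = F x y z := fun x y z => by
    rw [h23, hper, h23]
  have hper1 : ∀ x y z, F (x + 1) y z = F x y z := fun x y z => by
    rw [h12, hper2, h12]
  have hF' : ∀ {α : Type} [MeasurableSpace α] {f g h : α → ℝ}, Measurable f → Measurable g →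
      Measurable h → Measurable fun x => F (f x) (g x) (h x) := fun hf hg hh =>
    hF.comp (hf.prodMk (hg.prodMk hh))
  set H : ℝ × ℝ → ℝ≥0∞ := fun d => ∫⁻ u in Ico (0 : ℝ) 1, F u (u + d.1) (u + d.2) with hHdef
  have hHm : Measurable H := by
    refine Measurable.lintegral_prod_right' (f := fun x : (ℝ × ℝ) × ℝ =>
      F x.2 (x.2 + x.1.1) (x.2 + x.1.2)) (hF' ?_ ?_ ?_) <;> fun_prop
  have hswap : ∀ v w, H (v, w) = H (w, v) := fun v w => by
    simp only [hHdef]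
    exact lintegral_congr fun u => h23 _ _ _
  have hHper : ∀ v w, H (v, w + 1) = H (v, w) := fun v w => by
    simp only [hHdef]
    refine lintegral_congr fun u => ?_
    rw [← add_assoc, hper]
  have hrot : ∀ v w, H (v, w) = H (-v, w - v) := fun v w => by
    simp only [hHdef]
    have hp : Function.Periodic (fun u => F u (u + v) (u + w)) 1 := fun u => by
      simp only
      rw [hper1, add_right_comm, hper2, add_right_comm, hper]
    rw [← setLIntegral_Ico_comp_add_of_periodic hp (-v)]
    refine lintegral_congr fun u => ?_
    rw [h12]
    congr 1 <;> ring
  have step : ∀ u, ∫⁻ v in Ico (0 : ℝ) 1, ∫⁻ w in Ico (0 : ℝ) 1, F u v w =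
      ∫⁻ d in Ico (0 : ℝ) 1 ×ˢ Ico (0 : ℝ) 1, F u (u + d.1) (u + d.2) := by
    intro u
    have hpw : ∀ v, ∫⁻ w in Ico (0 : ℝ) 1, F u v w = ∫⁻ w in Ico (0 : ℝ) 1, F u v (u + w) := by
      intro v
      rw [← setLIntegral_Ico_comp_add_of_periodic (hper u v) u]
      simp only [add_comm]
    simp only [hpw]
    have hpv : Function.Periodic (fun v => ∫⁻ w in Ico (0 : ℝ) 1, F u v (u + w)) 1 := fun v => by
      simp only [hper2]
    rw [← setLIntegral_Ico_comp_add_of_periodic hpv u, Measure.volume_eq_prod,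
      ← Measure.prod_restrict, lintegral_prod _ (hF' (by fun_prop) (by fun_prop)
        (by fun_prop)).aemeasurable]
    simp only [add_comm]
  simp only [step]
  rw [lintegral_lintegral_swap (f := fun u (d : ℝ × ℝ) => F u (u + d.1) (u + d.2)) (hF' (by fun_prop) (by fun_prop) (by fun_prop)).aemeasurable]
  rw [setLIntegral_square_eq_arcDomain hHm hswap hrot hHper, arcMeasure,
    lintegral_prod_symm _ (hF' (by fun_prop) (by fun_prop) (by fun_prop)).aemeasurable]
  simp only [hHdef, sub_eq_add_neg]

end Symmetrization

section SobolevBasics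

theorem rpow_lintegral_le_lintegral_rpow {α : Type*} [MeasurableSpace α] (μ : Measure α)
    [IsProbabilityMeasure μ] {q : ℝ} (hq : 1 < q) {f : α → ℝ≥0∞} (hf : AEMeasurable f μ) :
    (∫⁻ x, f x ∂μ) ^ q ≤ ∫⁻ x, f x ^ q ∂μ := by
  have h := ENNReal.lintegral_mul_le_Lp_mul_Lq μ (Real.HolderConjugate.conjExponent hq) hf
    (aemeasurable_const (b := 1))
  simp only [Pi.mul_apply, mul_one, ENNReal.one_rpow, lintegral_one, measure_univ] at h
  rwa [one_div, ENNReal.le_rpow_inv_iff (by linarith)] at h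

variable {n : ℕ} {s q : ℝ} {f f' g : ℝ → EuclideanSpace ℝ (Fin n)}

theorem ofReal_norm_rpow_eq (x : EuclideanSpace ℝ (Fin n)) (hq : 0 ≤ q) :
    ENNReal.ofReal (‖x‖ ^ q) = ‖x‖ₑ ^ q := by
  rw [← ENNReal.ofReal_rpow_of_nonneg (norm_nonneg _) hq, ofReal_norm]

/-- The integrand of the Sobolev–Slobodeckiĭ seminorm. -/
def slobodeckiiDensity (s q : ℝ) (g : ℝ → EuclideanSpace ℝ (Fin n)) (u w : ℝ) : ℝ≥0∞ :=
  ENNReal.ofReal (‖g (u + w) - g u‖ ^ q / |w| ^ (1 + q * s))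

theorem sobSemiPow_eq (s q : ℝ) (g : ℝ → EuclideanSpace ℝ (Fin n)) :
    sobSemiPow s q g = ∫⁻ u in Ico (0 : ℝ) 1, ∫⁻ w in Icc (-(1 / 2) : ℝ) (1 / 2),
      slobodeckiiDensity s q g u w := rfl

theorem measurable_slobodeckiiDensity (hg : Measurable g) :
    Measurable fun x : ℝ × ℝ => slobodeckiiDensity s q g x.1 x.2 := by
  unfold slobodeckiiDensity
  have h1 : Measurable fun x : ℝ × ℝ => g (x.1 + x.2) := hg.comp (by fun_prop)
  have h2 : Measurable fun x : ℝ × ℝ => g x.1 := hg.comp (by fun_prop)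
  exact ENNReal.measurable_ofReal.comp (((h1.sub h2).norm.pow_const q).div
    ((measurable_snd.norm).pow_const _))

theorem measurable_lintegral_slobodeckiiDensity (hg : Measurable g) :
    Measurable fun u => ∫⁻ w in Icc (-(1 / 2) : ℝ) (1 / 2), slobodeckiiDensity s q g u w :=
  (measurable_slobodeckiiDensity hg).lintegral_prod_right'

theorem enorm_rpow_le_slobodeckiiDensity (hq : 0 < q) (hs : 0 ≤ s) (u : ℝ) {w ρ : ℝ}
    (hw : |w| ≤ ρ) :
    ‖g (u + w) - g u‖ₑ ^ q ≤ ENNReal.ofReal (ρ ^ (1 + q * s)) * slobodeckiiDensity s q g u w := by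
  have hqs : 0 ≤ q * s := mul_nonneg hq.le hs
  rcases eq_or_ne w 0 with rfl | hw0
  · simp [hq]
  · have hpos : 0 < |w| := abs_pos.2 hw0
    rw [slobodeckiiDensity, ← ENNReal.ofReal_mul (Real.rpow_nonneg (hpos.le.trans hw) _),
      ← ofReal_norm_rpow_eq _ hq.le]
    refine ENNReal.ofReal_le_ofReal ?_
    rw [mul_div_assoc', le_div_iff₀ (Real.rpow_pos_of_pos hpos _), mul_comm]
    exact mul_le_mul_of_nonneg_right (Real.rpow_le_rpow hpos.le hw (by linarith))
      (Real.rpow_nonneg (norm_nonneg _) _)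

theorem lintegral_enorm_rpow_lt_top (hq : 1 < q) (hs : 0 ≤ s) (hg : Measurable g)
    (hper : Function.Periodic g 1) (hS : sobSemiPow s q g < ⊤) :
    ∫⁻ u in Ico (0 : ℝ) 1, ‖g u‖ₑ ^ q < ⊤ := by
  have hq0 : 0 < q := by linarith
  have hae := ae_lt_top (measurable_lintegral_slobodeckiiDensity hg) hS.ne
  have : (ae (volume.restrict (Ico (0 : ℝ) 1))).NeBot := by
    rw [ae_neBot]
    simp
  obtain ⟨u, hu⟩ := hae.exists
  have h1 : ∫⁻ w in Icc (-(1 / 2) : ℝ) (1 / 2), ‖g (u + w) - g u‖ₑ ^ q < ⊤ := by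
    refine lt_of_le_of_lt (setLIntegral_mono' measurableSet_Icc fun w hw =>
      enorm_rpow_le_slobodeckiiDensity (ρ := 1) hq0 hs u ?_) ?_
    · have := abs_le.2 hw
      linarith
    · simpa using hu
  have h2 : ∫⁻ w in Icc (-(1 / 2) : ℝ) (1 / 2), ‖g u‖ₑ ^ q < ⊤ := by
    rw [setLIntegral_const]
    exact ENNReal.mul_lt_top (ENNReal.rpow_lt_top_of_nonneg hq0.le enorm_ne_top) (by simp)
  have h3 : ∫⁻ w in Icc (-(1 / 2) : ℝ) (1 / 2), ‖g (u + w)‖ₑ ^ q < ⊤ := by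
    have := ENNReal.lintegral_rpow_add_lt_top_of_lintegral_rpow_lt_top (μ := volume.restrict
      (Icc (-(1 / 2) : ℝ) (1 / 2))) (p := q) (f := fun w => ‖g (u + w) - g u‖ₑ)
      (g := fun w => ‖g u‖ₑ)
      (((hg.comp (measurable_const_add u)).sub_const _).enorm.aemeasurable) h1 h2 hq.le
    refine lt_of_le_of_lt (lintegral_mono fun w => ?_) this
    refine ENNReal.rpow_le_rpow ?_ hq0.le
    have := enorm_add_le (g (u + w) - g u) (g u)
    simpa using this
  have hp : Function.Periodic (fun u => ‖g u‖ₑ ^ q) 1 := fun x => by simp only [hper x]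
  have h4 := setLIntegral_Ico_comp_add (fun x => ‖g x‖ₑ ^ q) (-(1 / 2)) (1 / 2) u
  simp only [add_comm _ u] at h4
  rw [← setLIntegral_congr Ico_ae_eq_Icc, h4, show u + 1 / 2 = (u + -(1 / 2)) + 1 by ring,
    setLIntegral_Ico_eq_of_periodic hp _ 0, zero_add] at h3
  exact h3

theorem InW.lintegral_enorm_rpow_lt_top (hq : 1 < q) (hs : 0 ≤ s) (h : InW s q f f') :
    ∫⁻ u in Ico (0 : ℝ) 1, ‖f' u‖ₑ ^ q < ⊤ :=
  _root_.lintegral_enorm_rpow_lt_top hq hs h.1.meas' h.1.periodic' h.2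

theorem InW.intervalIntegrable (hq : 1 < q) (hs : 0 ≤ s) (h : InW s q f f') (a b : ℝ) :
    IntervalIntegrable f' volume a b := by
  refine h.1.periodic'.intervalIntegrable (t := 0) one_pos.ne' ?_ a b
  rw [zero_add, intervalIntegrable_iff_integrableOn_Ico_of_le zero_le_one]
  refine ⟨h.1.meas'.aestronglyMeasurable, ?_⟩
  have : IsProbabilityMeasure (volume.restrict (Ico (0 : ℝ) 1)) := ⟨by simp⟩
  have h1 := rpow_lintegral_le_lintegral_rpow (volume.restrict (Ico (0 : ℝ) 1)) hq h.1.meas'.enorm.aemeasurable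
  have := h1.trans_lt (h.lintegral_enorm_rpow_lt_top hq hs)
  exact (ENNReal.rpow_lt_top_iff_of_pos (by linarith)).1 this

theorem InW.locallyIntegrable (hq : 1 < q) (hs : 0 ≤ s) (h : InW s q f f') :
    LocallyIntegrable f' volume :=
  locallyIntegrable_iff.2 fun K hK => by
    obtain ⟨a, ha⟩ := hK.bddBelow
    obtain ⟨b, hb⟩ := hK.bddAbove
    rcases le_total a b with hab | hab
    · have := (intervalIntegrable_iff_integrableOn_Icc_of_le hab).1 (h.intervalIntegrable hq hs a b)
      exact this.mono_set fun x hx => ⟨ha hx, hb hx⟩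
    · have := (intervalIntegrable_iff_integrableOn_Icc_of_le hab).1 (h.intervalIntegrable hq hs b a)
      exact this.mono_set fun x hx => ⟨hab.trans (ha hx), (hb hx).trans hab⟩

theorem InW.sub_eq_integral (hq : 1 < q) (hs : 0 ≤ s) (h : InW s q f f') (x y : ℝ) :
    f y - f x = ∫ t in x..y, f' t := by
  rw [h.1.primitive y, h.1.primitive x, ← intervalIntegral.integral_interval_sub_left
    (h.intervalIntegrable hq hs 0 y) (h.intervalIntegrable hq hs 0 x)]
  abel

theorem InW.continuous (hq : 1 < q) (hs : 0 ≤ s) (h : InW s q f f') : Continuous f := by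
  rw [show f = fun u => f 0 + ∫ t in (0 : ℝ)..u, f' t from funext h.1.primitive]
  exact continuous_const.add (intervalIntegral.continuous_primitive
    (h.intervalIntegrable hq hs) 0)

theorem InW.sub (hq : 1 < q) (hs : 0 ≤ s) {h h' : ℝ → EuclideanSpace ℝ (Fin n)}
    (hf : InW s q f f') (hh : InW s q h h') :
    InW s q (fun u => f u - h u) (fun u => f' u - h' u) := by
  refine ⟨⟨fun x => by simp only [hf.1.periodic x, hh.1.periodic x],
    fun x => by simp only [hf.1.periodic' x, hh.1.periodic' x],
    hf.1.meas'.sub hh.1.meas', fun u => ?_⟩, ?_⟩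
  · rw [intervalIntegral.integral_sub (hf.intervalIntegrable hq hs 0 u)
      (hh.intervalIntegrable hq hs 0 u)]
    nth_rewrite 1 [hf.1.primitive u, hh.1.primitive u]
    abel
  · have key : ∀ u w, slobodeckiiDensity s q (fun u => f' u - h' u) u w ≤
        2 ^ (q - 1) * (slobodeckiiDensity s q f' u w + slobodeckiiDensity s q h' u w) := by
      intro u w
      simp only [slobodeckiiDensity]
      have hd : 0 ≤ |w| ^ (1 + q * s) := Real.rpow_nonneg (abs_nonneg _) _
      simp only [div_eq_mul_inv]
      have hq0 : 0 ≤ q := by linarith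
      simp only [ENNReal.ofReal_mul (Real.rpow_nonneg (norm_nonneg _) q), ofReal_norm_rpow_eq _ hq0]
      rw [← add_mul, ← mul_assoc]
      gcongr
      refine le_trans ?_ (ENNReal.rpow_add_le_mul_rpow_add_rpow _ _ hq.le)
      refine ENNReal.rpow_le_rpow ?_ hq0
      rw [show f' (u + w) - h' (u + w) - (f' u - h' u) =
        (f' (u + w) - f' u) - (h' (u + w) - h' u) by abel]
      exact enorm_sub_le
    have m1 := measurable_slobodeckiiDensity (s := s) (q := q) hf.1.meas'
    have m2 := measurable_slobodeckiiDensity (s := s) (q := q) hh.1.meas'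
    have hc : (2 : ℝ≥0∞) ^ (q - 1) ≠ ⊤ :=
      (ENNReal.rpow_lt_top_of_nonneg (by linarith) (by simp)).ne
    rw [sobSemiPow_eq]
    refine lt_of_le_of_lt (lintegral_mono fun u => lintegral_mono fun w => key u w) ?_
    simp only [lintegral_const_mul' _ _ hc]
    refine ENNReal.mul_lt_top hc.lt_top ?_
    have e : ∀ u, ∫⁻ w in Icc (-(1 / 2) : ℝ) (1 / 2), (slobodeckiiDensity s q f' u w +
        slobodeckiiDensity s q h' u w) = (∫⁻ w in Icc (-(1 / 2) : ℝ) (1 / 2),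
        slobodeckiiDensity s q f' u w) + ∫⁻ w in Icc (-(1 / 2) : ℝ) (1 / 2),
        slobodeckiiDensity s q h' u w := fun u =>
      lintegral_add_left (m1.comp measurable_prodMk_left) _
    simp only [e]
    rw [lintegral_add_left (measurable_lintegral_slobodeckiiDensity hf.1.meas')]
    exact ENNReal.add_lt_top.2 ⟨hf.2, hh.2⟩

end SobolevBasics

section Campanato

variable {n : ℕ} {s q : ℝ} {f f' g : ℝ → EuclideanSpace ℝ (Fin n)}

theorem enorm_integral_sub_integral_rpow_le (hq : 1 < q) (hg : Measurable g) {μ ν : Measure ℝ}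
    [IsProbabilityMeasure μ] [IsProbabilityMeasure ν] (hμ : Integrable g μ)
    (hν : Integrable g ν) :
    ‖∫ y, g y ∂μ - ∫ z, g z ∂ν‖ₑ ^ q ≤ ∫⁻ y, ∫⁻ z, ‖g z - g y‖ₑ ^ q ∂ν ∂μ := by
  have hq0 : 0 ≤ q := by linarith
  have h1 : ∀ y, ‖g y - ∫ z, g z ∂ν‖ₑ ^ q ≤ ∫⁻ z, ‖g z - g y‖ₑ ^ q ∂ν := by
    intro y
    have e : g y - ∫ z, g z ∂ν = - ∫ z, (g z - g y) ∂ν := by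
      rw [integral_sub hν (integrable_const _)]
      simp
    rw [e, enorm_neg]
    exact (ENNReal.rpow_le_rpow (enorm_integral_le_lintegral_enorm _) hq0).trans
      (rpow_lintegral_le_lintegral_rpow ν hq (hg.sub_const _).enorm.aemeasurable)
  have e : ∫ y, g y ∂μ - ∫ z, g z ∂ν = ∫ y, (g y - ∫ z, g z ∂ν) ∂μ := by
    rw [integral_sub hμ (integrable_const _)]
    simp
  rw [e]
  refine (ENNReal.rpow_le_rpow (enorm_integral_le_lintegral_enorm _) hq0).trans
    ((rpow_lintegral_le_lintegral_rpow μ hq (hg.sub_const _).enorm.aemeasurable).trans ?_)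
  exact lintegral_mono h1

theorem periodic_lintegral_slobodeckiiDensity (hper : Function.Periodic g 1) :
    Function.Periodic (fun u => ∫⁻ w in Icc (-(1 / 2) : ℝ) (1 / 2),
      slobodeckiiDensity s q g u w) 1 := fun u => by
  simp only [slobodeckiiDensity, add_right_comm u 1, hper _]

theorem lintegral_interval_slobodeckiiDensity_le (hper : Function.Periodic g 1) (x : ℝ) {ρ : ℝ}
    (hρ : ρ ≤ 1 / 2) :
    ∫⁻ y in Ioc x (x + ρ), ∫⁻ z in Ioc x (x + ρ), slobodeckiiDensity s q g y (z - y) ≤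
      sobSemiPow s q g := by
  have h1 : ∀ y ∈ Ioc x (x + ρ), ∫⁻ z in Ioc x (x + ρ), slobodeckiiDensity s q g y (z - y) ≤
      ∫⁻ w in Icc (-(1 / 2) : ℝ) (1 / 2), slobodeckiiDensity s q g y w := by
    intro y hy
    have h := (measurePreserving_sub_right (volume : Measure ℝ) y).setLIntegral_comp_preimage_emb
      (measurableEmbedding_subRight y) (slobodeckiiDensity s q g y) (Icc (-(1 / 2)) (1 / 2))
    rw [← h]
    refine lintegral_mono_set fun z hz => ?_
    simp only [mem_Ioc, mem_preimage, mem_Icc] at *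
    constructor <;> linarith
  refine (setLIntegral_mono' measurableSet_Ioc h1).trans ?_
  rw [sobSemiPow_eq, setLIntegral_congr (Ioc_ae_eq_Icc.trans Ico_ae_eq_Icc.symm)]
  refine (lintegral_mono_set (Ico_subset_Ico_right (show x + ρ ≤ x + 1 by linarith))).trans ?_
  rw [setLIntegral_Ico_eq_of_periodic (periodic_lintegral_slobodeckiiDensity hper) x 0, zero_add]

/-- The uniform probability measure on `(x, x + ρ]`. -/
def intervalAverage (x ρ : ℝ) : Measure ℝ := ENNReal.ofReal ρ⁻¹ • volume.restrict (Ioc x (x + ρ))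

theorem isProbabilityMeasure_intervalAverage (x : ℝ) {ρ : ℝ} (hρ : 0 < ρ) :
    IsProbabilityMeasure (intervalAverage x ρ) := ⟨by
  simp only [intervalAverage, Measure.smul_apply, Measure.restrict_apply_univ, Real.volume_Ioc,
    smul_eq_mul, add_sub_cancel_left]
  rw [← ENNReal.ofReal_mul (inv_nonneg.2 hρ.le), inv_mul_cancel₀ hρ.ne', ENNReal.ofReal_one]⟩

theorem integral_intervalAverage (x : ℝ) {ρ : ℝ} (hρ : 0 < ρ) :
    ∫ y, g y ∂(intervalAverage x ρ) = ρ⁻¹ • ∫ t in x..x + ρ, g t := by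
  rw [intervalAverage, integral_smul_measure, ENNReal.toReal_ofReal (inv_nonneg.2 hρ.le),
    intervalIntegral.integral_of_le (by linarith)]

theorem InW.enorm_average_sub_average_rpow_le (hq : 1 < q) (hs : 0 ≤ s) (h : InW s q f f') (x : ℝ)
    {ρ : ℝ} (hρ : 0 < ρ) (hρ' : ρ ≤ 1 / 2) :
    ‖ρ⁻¹ • (∫ t in x..x + ρ, f' t) - (ρ / 2)⁻¹ • ∫ t in x..x + ρ / 2, f' t‖ₑ ^ q ≤
      ENNReal.ofReal (2 * ρ ^ (q * s - 1)) * sobSemiPow s q f' := by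
  have hρ2 : 0 < ρ / 2 := by linarith
  have := isProbabilityMeasure_intervalAverage x hρ
  have := isProbabilityMeasure_intervalAverage x hρ2
  have hi : ∀ {r : ℝ}, 0 < r → Integrable f' (intervalAverage x r) := fun {r} hr => by
    refine Integrable.smul_measure ?_ (by simp)
    exact (intervalIntegrable_iff_integrableOn_Ioc_of_le (by linarith)).1
      (h.intervalIntegrable hq hs x (x + r))
  rw [← integral_intervalAverage x hρ, ← integral_intervalAverage x hρ2]
  refine (enorm_integral_sub_integral_rpow_le hq h.1.meas' (hi hρ) (hi hρ2)).trans ?_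
  simp only [intervalAverage, lintegral_smul_measure, smul_eq_mul]
  have key : ∫⁻ y in Ioc x (x + ρ), ENNReal.ofReal (ρ / 2)⁻¹ *
      ∫⁻ z in Ioc x (x + ρ / 2), ‖f' z - f' y‖ₑ ^ q ≤
      ENNReal.ofReal (ρ / 2)⁻¹ * (ENNReal.ofReal (ρ ^ (1 + q * s)) *
      ∫⁻ y in Ioc x (x + ρ), ∫⁻ z in Ioc x (x + ρ), slobodeckiiDensity s q f' y (z - y)) := by
    rw [← lintegral_const_mul' _ _ ENNReal.ofReal_ne_top,
      ← lintegral_const_mul' _ _ ENNReal.ofReal_ne_top]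
    refine setLIntegral_mono' measurableSet_Ioc fun y hy => ?_
    gcongr
    rw [← lintegral_const_mul' _ _ ENNReal.ofReal_ne_top]
    refine (lintegral_mono_set (Ioc_subset_Ioc_right (show x + ρ / 2 ≤ x + ρ by linarith))).trans ?_
    refine setLIntegral_mono' measurableSet_Ioc fun z hz => ?_
    have := enorm_rpow_le_slobodeckiiDensity (g := f') (by linarith : 0 < q) hs y (w := z - y)
      (ρ := ρ) (by rw [abs_le]; constructor <;> linarith [hy.1, hy.2, hz.1, hz.2])
    simpa using this
  refine (mul_le_mul_right key _).trans ?_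
  have e : ENNReal.ofReal (2 * ρ ^ (q * s - 1)) = ENNReal.ofReal ρ⁻¹ * (ENNReal.ofReal (ρ / 2)⁻¹ *
      ENNReal.ofReal (ρ ^ (1 + q * s))) := by
    rw [← ENNReal.ofReal_mul (by positivity), ← ENNReal.ofReal_mul (by positivity)]
    congr 1
    rw [show q * s - 1 = (1 + q * s) - 2 by ring, Real.rpow_sub hρ, Real.rpow_two]
    field_simp
  rw [e, mul_assoc, mul_assoc]
  gcongr
  exact lintegral_interval_slobodeckiiDensity_le h.1.periodic' x hρ'

theorem InW.norm_average_sub_average_le (hq : 1 < q) (hs : 0 ≤ s) (h : InW s q f f') (x : ℝ)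
    {ρ : ℝ} (hρ : 0 < ρ) (hρ' : ρ ≤ 1 / 2) :
    ‖ρ⁻¹ • (∫ t in x..x + ρ, f' t) - (ρ / 2)⁻¹ • ∫ t in x..x + ρ / 2, f' t‖ ≤
      2 * ρ ^ (s - 1 / q) * (sobSemiPow s q f').toReal ^ (1 / q) := by
  have hq0 : 0 < q := by linarith
  have h1 := h.enorm_average_sub_average_rpow_le hq hs x hρ hρ'
  set A := ρ⁻¹ • (∫ t in x..x + ρ, f' t) - (ρ / 2)⁻¹ • ∫ t in x..x + ρ / 2, f' t
  set S := (sobSemiPow s q f').toReal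
  have hS : sobSemiPow s q f' = ENNReal.ofReal S := (ENNReal.ofReal_toReal h.2.ne).symm
  have hS0 : 0 ≤ S := ENNReal.toReal_nonneg
  rw [← ofReal_norm_rpow_eq _ hq0.le, hS, ← ENNReal.ofReal_mul (by positivity),
    ENNReal.ofReal_le_ofReal_iff (by positivity)] at h1
  have h2 := Real.rpow_le_rpow (by positivity) h1 (by positivity : 0 ≤ 1 / q)
  rw [← Real.rpow_mul (norm_nonneg _), mul_one_div_cancel hq0.ne', Real.rpow_one,
    Real.mul_rpow (by positivity) hS0, Real.mul_rpow (by positivity) (by positivity),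
    ← Real.rpow_mul hρ.le] at h2
  refine h2.trans ?_
  rw [show (q * s - 1) * (1 / q) = s - 1 / q by field_simp]
  gcongr
  calc (2 : ℝ) ^ (1 / q) ≤ 2 ^ (1 : ℝ) :=
        Real.rpow_le_rpow_of_exponent_le (by norm_num) (by rw [div_le_one hq0]; linarith)
    _ = 2 := Real.rpow_one 2

/-- A Campanato-type estimate: at almost every point the derivative is close to its averages. -/
theorem InW.ae_norm_average_sub_le (hq : 1 < q) (hs : 1 / q < s) (h : InW s q f f') :
    ∀ᵐ x : ℝ, ∀ r : ℝ, 0 < r → r ≤ 1 / 2 → ‖r⁻¹ • (f (x + r) - f x) - f' x‖ ≤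
      2 / (1 - (1 / 2) ^ (s - 1 / q)) * r ^ (s - 1 / q) *
        (sobSemiPow s q f').toReal ^ (1 / q) := by
  have hq0 : 0 < q := by linarith
  have hs0 : 0 ≤ s := le_trans (by positivity) hs.le
  filter_upwards [_root_.LocallyIntegrable.ae_hasDerivAt_integral (h.locallyIntegrable hq hs0)] with x hx r hr hr'
  set α := s - 1 / q with hα
  set S := (sobSemiPow s q f').toReal ^ (1 / q) with hS
  have hα0 : 0 < α := by rw [hα]; linarith
  have hS0 : 0 ≤ S := Real.rpow_nonneg ENNReal.toReal_nonneg _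
  set ρ : ℕ → ℝ := fun k => r * (1 / 2) ^ k with hρ
  have hρ0 : ∀ k, 0 < ρ k := fun k => by simp only [hρ]; positivity
  have hρr : ∀ k, ρ k ≤ 1 / 2 := fun k => by
    have : (1 / 2 : ℝ) ^ k ≤ 1 := pow_le_one₀ (by norm_num) (by norm_num)
    simp only [hρ]
    nlinarith
  have hlt : ((1 : ℝ) / 2) ^ α < 1 := Real.rpow_lt_one (by norm_num) (by norm_num) hα0
  set A : ℕ → EuclideanSpace ℝ (Fin n) := fun k => (ρ k)⁻¹ • ∫ t in x..x + ρ k, f' t with hA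
  have hstep : ∀ k, dist (A k) (A (k + 1)) ≤ (2 * r ^ α * S) * ((1 / 2) ^ α) ^ k := by
    intro k
    have e : ρ (k + 1) = ρ k / 2 := by simp only [hρ, pow_succ]; ring
    rw [dist_eq_norm]
    simp only [hA, e]
    refine (h.norm_average_sub_average_le hq hs0 x (hρ0 k) (hρr k)).trans (le_of_eq ?_)
    simp only [hρ]
    rw [Real.mul_rpow hr.le (by positivity), ← Real.rpow_natCast, ← Real.rpow_natCast,
      ← Real.rpow_mul (by norm_num), ← Real.rpow_mul (by norm_num), mul_comm (k : ℝ) α]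
    ring
  have hlim : Tendsto A atTop (𝓝 (f' x)) := by
    have h1 := (hx x).tendsto_slope_zero
    have h2 : Tendsto ρ atTop (𝓝[≠] 0) := by
      refine tendsto_nhdsWithin_iff.2 ⟨?_, Eventually.of_forall fun k => (hρ0 k).ne'⟩
      have := (tendsto_pow_atTop_nhds_zero_of_lt_one (by norm_num : (0 : ℝ) ≤ 1 / 2)
        (by norm_num)).const_mul r
      rwa [mul_zero] at this
    have h3 := h1.comp h2
    refine h3.congr fun k => ?_
    simp [hA]
  have := dist_le_of_le_geometric_of_tendsto₀ _ _ hlt hstep hlim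
  rw [dist_eq_norm] at this
  have e0 : A 0 = r⁻¹ • (f (x + r) - f x) := by
    simp only [hA, hρ, pow_zero, mul_one]
    rw [h.sub_eq_integral hq hs0]
  rw [e0] at this
  refine this.trans (le_of_eq ?_)
  ring

theorem sobNorm_nonneg (s q : ℝ) (f f' : ℝ → EuclideanSpace ℝ (Fin n)) : 0 ≤ sobNorm s q f f' := by
  unfold sobNorm
  positivity

theorem rpow_sobSemiPow_le_sobNorm (s q : ℝ) (f f' : ℝ → EuclideanSpace ℝ (Fin n)) :
    (sobSemiPow s q f').toReal ^ (1 / q) ≤ sobNorm s q f f' := by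
  have h1 : 0 ≤ (∫ u in Ico (0 : ℝ) 1, ‖f u‖ ^ q) ^ (1 / q) := by positivity
  have h2 : 0 ≤ (∫ u in Ico (0 : ℝ) 1, ‖f' u‖ ^ q) ^ (1 / q) := by positivity
  unfold sobNorm
  linarith

theorem InW.norm_sub_le_sobNorm (hq : 1 < q) (hs : 0 ≤ s) (h : InW s q f f') (x : ℝ) {t : ℝ}
    (ht0 : 0 ≤ t) (ht1 : t ≤ 1) : ‖f (x + t) - f x‖ ≤ sobNorm s q f f' := by
  have hq0 : 0 < q := by linarith
  have : IsProbabilityMeasure (volume.restrict (Ico (0 : ℝ) 1)) := ⟨by simp⟩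
  have hp : Function.Periodic (fun u => ‖f' u‖ₑ) 1 := fun x => by simp only [h.1.periodic' x]
  have h1 : ‖f (x + t) - f x‖ₑ ≤ ∫⁻ u in Ico (0 : ℝ) 1, ‖f' u‖ₑ := by
    rw [h.sub_eq_integral hq hs, intervalIntegral.integral_of_le (by linarith)]
    refine (enorm_integral_le_lintegral_enorm _).trans ?_
    rw [setLIntegral_congr (Ioc_ae_eq_Icc.trans Ico_ae_eq_Icc.symm)]
    refine (lintegral_mono_set (Ico_subset_Ico_right (show x + t ≤ x + 1 by linarith))).trans ?_
    rw [setLIntegral_Ico_eq_of_periodic hp x 0, zero_add]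
  have h2 := (ENNReal.rpow_le_rpow h1 hq0.le).trans
    (rpow_lintegral_le_lintegral_rpow _ hq h.1.meas'.enorm.aemeasurable)
  have hnn : ∀ u, 0 ≤ ‖f' u‖ ^ q := fun u => by positivity
  have h3 : ENNReal.ofReal (∫ u in Ico (0 : ℝ) 1, ‖f' u‖ ^ q) =
      ∫⁻ u in Ico (0 : ℝ) 1, ‖f' u‖ₑ ^ q := by
    rw [integral_eq_lintegral_of_nonneg_ae (Eventually.of_forall hnn)
      (h.1.meas'.norm.pow_const q).aestronglyMeasurable]
    simp only [ofReal_norm_rpow_eq _ hq0.le]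
    exact ENNReal.ofReal_toReal (h.lintegral_enorm_rpow_lt_top hq hs).ne
  rw [← h3, ← ofReal_norm_rpow_eq _ hq0.le, ENNReal.ofReal_le_ofReal_iff (by positivity)] at h2
  have h4 := Real.rpow_le_rpow (by positivity) h2 (by positivity : 0 ≤ 1 / q)
  rw [← Real.rpow_mul (norm_nonneg _), mul_one_div_cancel hq0.ne', Real.rpow_one] at h4
  refine h4.trans ?_
  have h5 : 0 ≤ (∫ u in Ico (0 : ℝ) 1, ‖f u‖ ^ q) ^ (1 / q) := by positivity
  have h6 : 0 ≤ (sobSemiPow s q f').toReal ^ (1 / q) := by positivity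
  unfold sobNorm
  linarith

/-- The embedding of the fractional Sobolev space into Lipschitz functions. -/
theorem exists_ae_norm_deriv_le_sobNorm (n : ℕ) (hq : 1 < q) (hs : 1 / q < s) :
    ∃ C : ℝ, 0 ≤ C ∧ ∀ f f' : ℝ → EuclideanSpace ℝ (Fin n), InW s q f f' →
      ∀ᵐ x : ℝ, ‖f' x‖ ≤ C * sobNorm s q f f' := by
  have hs0 : 0 ≤ s := le_trans (by positivity) hs.le
  set K := 2 / (1 - (1 / 2) ^ (s - 1 / q)) * (1 / 2 : ℝ) ^ (s - 1 / q) with hK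
  have hK0 : 0 ≤ K := by
    have hlt : ((1 : ℝ) / 2) ^ (s - 1 / q) < 1 :=
      Real.rpow_lt_one (by norm_num) (by norm_num) (by linarith)
    have : 0 < 1 - ((1 : ℝ) / 2) ^ (s - 1 / q) := by linarith
    positivity
  refine ⟨2 + K, by positivity, fun f f' h => ?_⟩
  filter_upwards [h.ae_norm_average_sub_le hq hs] with x hx
  have h1 := hx (1 / 2) (by norm_num) le_rfl
  have h2 := h.norm_sub_le_sobNorm hq hs0 x (t := 1 / 2) (by norm_num) (by norm_num)
  have h3 := rpow_sobSemiPow_le_sobNorm s q f f'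
  rw [norm_sub_rev] at h1
  have h4 := norm_le_norm_add_norm_sub' (f' x) ((1 / 2 : ℝ)⁻¹ • (f (x + 1 / 2) - f x))
  rw [norm_smul] at h4
  norm_num at h4 h2
  have h5 := mul_le_mul_of_nonneg_left h3 hK0
  norm_num at h1 h5 hK
  rw [← hK] at h1
  linarith

theorem InW.norm_sub_le_of_ae_bound (hq : 1 < q) (hs : 0 ≤ s) (h : InW s q f f') {M : ℝ}
    (hM : ∀ᵐ x : ℝ, ‖f' x‖ ≤ M) (x y : ℝ) : ‖f y - f x‖ ≤ M * |y - x| := by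
  rw [h.sub_eq_integral hq hs]
  exact intervalIntegral.norm_integral_le_of_norm_le_const_ae
    (hM.mono fun t ht _ => ht)

theorem InjCircle.ne_of_mem_Ioo (h : InjCircle f) (x : ℝ) {t : ℝ} (ht0 : 0 < t) (ht1 : t < 1) :
    f (x + t) ≠ f x := fun e => by
  obtain ⟨k, hk⟩ := h _ _ e
  have h1 : (k : ℝ) = -t := by linarith
  have h2 : (-1 : ℝ) < k := by linarith
  have h3 : (k : ℝ) < 0 := by linarith
  have h4 : -1 < k := by exact_mod_cast h2
  have h5 : k < 0 := by exact_mod_cast h3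
  omega

/-- Regular embedded curves of fractional Sobolev regularity are locally bi-Lipschitz. -/
theorem InU.exists_mul_le_norm_sub (hq : 1 < q) (hs : 1 / q < s) (h : InU s q f f') :
    ∃ c : ℝ, 0 < c ∧ ∀ x t : ℝ, 0 ≤ t → t ≤ 2 / 3 → c * t ≤ ‖f (x + t) - f x‖ := by
  have hs0 : 0 ≤ s := le_trans (by positivity) hs.le
  obtain ⟨hW, hinj, c₀, hc₀, hreg⟩ := h
  have hcont := hW.continuous hq hs0
  set α := s - 1 / q with hα
  have hα0 : 0 < α := by rw [hα]; linarith
  set K := 2 / (1 - (1 / 2) ^ α) * (sobSemiPow s q f').toReal ^ (1 / q) with hK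
  obtain ⟨r₀, hr₀, hr₀', hKr⟩ : ∃ r₀ : ℝ, 0 < r₀ ∧ r₀ ≤ 1 / 2 ∧ ∀ r, 0 < r → r ≤ r₀ →
      K * r ^ α ≤ c₀ / 2 := by
    have h1 : Tendsto (fun r : ℝ => K * r ^ α) (𝓝 0) (𝓝 0) := by
      have := ((Real.continuous_rpow_const hα0.le).tendsto 0).const_mul K
      rwa [Real.zero_rpow hα0.ne', mul_zero] at this
    obtain ⟨ε, hε, hball⟩ := Metric.eventually_nhds_iff.1 (h1.eventually_lt_const (half_pos hc₀))
    refine ⟨min (ε / 2) (1 / 2), by positivity, min_le_right _ _, fun r hr hr' => (hball ?_).le⟩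
    rw [Real.dist_eq, sub_zero, abs_of_pos hr]
    have := hr'.trans (min_le_left _ _)
    linarith
  have hsmall : ∀ t, 0 < t → t ≤ r₀ → ∀ x, c₀ / 2 * t ≤ ‖f (x + t) - f x‖ := by
    intro t ht ht'
    have hclosed : IsClosed {x | c₀ / 2 * t ≤ ‖f (x + t) - f x‖} :=
      isClosed_le continuous_const (by fun_prop)
    have hdense : Dense {x | c₀ / 2 * t ≤ ‖f (x + t) - f x‖} := by
      refine Measure.dense_of_ae (μ := volume) ?_
      filter_upwards [hreg, hW.ae_norm_average_sub_le hq hs] with x hx1 hx2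
      have h1 := hx2 t ht (ht'.trans hr₀')
      have h2 := hKr t ht ht'
      rw [norm_sub_rev] at h1
      have h3 := norm_le_norm_add_norm_sub' (f' x) (t⁻¹ • (f (x + t) - f x))
      rw [norm_smul, norm_inv, Real.norm_of_nonneg ht.le] at h3
      have h4 : c₀ / 2 ≤ t⁻¹ * ‖f (x + t) - f x‖ := by
        have : 2 / (1 - (1 / 2) ^ α) * t ^ α * (sobSemiPow s q f').toReal ^ (1 / q) =
          K * t ^ α := by rw [hK]; ring
        linarith
      rw [inv_mul_eq_div, le_div_iff₀ ht] at h4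
      exact h4
    intro x
    have := hclosed.closure_eq ▸ hdense x
    exact this
  have hper : ∀ x t, ‖f (x + t) - f x‖ = ‖f (Int.fract x + t) - f (Int.fract x)‖ := by
    intro x t
    have hz : ∀ y : ℝ, f (y - ⌊x⌋) = f y := fun y => by
      simpa using hW.1.periodic.sub_zsmul_eq (x := y) ⌊x⌋
    rw [← Int.self_sub_floor, hz, sub_add_eq_add_sub, hz]
  obtain ⟨m, hm, hlarge⟩ : ∃ m : ℝ, 0 < m ∧ ∀ x t, r₀ ≤ t → t ≤ 2 / 3 →
      m ≤ ‖f (x + t) - f x‖ := by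
    have hcpt : IsCompact (Icc (0 : ℝ) 1 ×ˢ Icc r₀ (2 / 3)) := isCompact_Icc.prod isCompact_Icc
    have hne : (Icc (0 : ℝ) 1 ×ˢ Icc r₀ (2 / 3)).Nonempty :=
      ⟨(0, r₀), ⟨by simp, ⟨le_rfl, by linarith⟩⟩⟩
    obtain ⟨z, hz, hmin⟩ := hcpt.exists_isMinOn hne
      (f := fun z : ℝ × ℝ => ‖f (z.1 + z.2) - f z.1‖) (by fun_prop)
    refine ⟨_, norm_pos_iff.2 (sub_ne_zero.2 (hinj.ne_of_mem_Ioo z.1 (hr₀.trans_le hz.2.1)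
      (by linarith [hz.2.2]))), fun x t ht ht' => ?_⟩
    rw [hper x t]
    exact hmin (a := (Int.fract x, t))
      ⟨⟨Int.fract_nonneg x, (Int.fract_lt_one x).le⟩, ht, ht'⟩
  refine ⟨min (c₀ / 2) m, by positivity, fun x t ht ht' => ?_⟩
  rcases ht.eq_or_lt with rfl | ht
  · simp
  rcases le_total t r₀ with htr | htr
  · exact (mul_le_mul_of_nonneg_right (min_le_left _ _) ht.le).trans (hsmall t ht htr x)
  · refine le_trans ?_ (hlarge x t htr ht')
    have := min_le_right (c₀ / 2) m
    nlinarith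

/-- A curve that is bi-Lipschitz on arcs of length at most `2 / 3` is injective on the circle. -/
theorem injCircle_of_mul_le_norm_sub (hper : Function.Periodic f 1) {c : ℝ} (hc : 0 < c)
    (h : ∀ x t : ℝ, 0 ≤ t → t ≤ 2 / 3 → c * t ≤ ‖f (x + t) - f x‖) : InjCircle f := by
  intro u v huv
  have hz : f (u + Int.fract (v - u)) = f u := by
    have := hper.sub_zsmul_eq (x := v) ⌊v - u⌋
    rw [huv, ← this, ← Int.self_sub_floor, zsmul_one]
    congr 1
    ring
  have hzero : ∀ x t : ℝ, 0 ≤ t → t ≤ 2 / 3 → f (x + t) = f x → t = 0 := fun x t ht ht' e => by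
    have := h x t ht ht'
    rw [e, sub_self, norm_zero] at this
    nlinarith
  have h0 : Int.fract (v - u) = 0 := by
    rcases le_total (Int.fract (v - u)) (2 / 3) with hle | hle
    · exact hzero u _ (Int.fract_nonneg _) hle hz
    · have h1 := hzero (u + Int.fract (v - u)) (1 - Int.fract (v - u))
        (by linarith [Int.fract_lt_one (v - u)]) (by linarith)
        (by rw [hz, ← hper u]; congr 1; ring)
      linarith [Int.fract_lt_one (v - u)]
  refine ⟨⌊v - u⌋, ?_⟩
  have := Int.self_sub_floor (v - u)
  linarith

/-- The set of regular embedded curves is open. -/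
theorem InU.isOpen (hq : 1 < q) (hs : 1 / q < s) (h : InU s q f f') :
    ∃ ε c : ℝ, 0 < ε ∧ 0 < c ∧ ∀ η η' : ℝ → EuclideanSpace ℝ (Fin n), InW s q η η' →
      sobNorm s q (fun u => η u - f u) (fun u => η' u - f' u) < ε →
      InU s q η η' ∧ (∀ᵐ x : ℝ, c ≤ ‖η' x‖) ∧
        ∀ x t : ℝ, 0 ≤ t → t ≤ 2 / 3 → c * t ≤ ‖η (x + t) - η x‖ := by
  have hs0 : 0 ≤ s := le_trans (by positivity) hs.le
  obtain ⟨c₁, hc₁, hbil⟩ := h.exists_mul_le_norm_sub hq hs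
  obtain ⟨hW, hinj, c₀, hc₀, hreg⟩ := h
  obtain ⟨C, hC, hemb⟩ := exists_ae_norm_deriv_le_sobNorm n hq hs
  set c := min c₀ c₁ / 2 with hc
  have hcpos : 0 < c := by positivity
  have hcc₀ : 2 * c ≤ c₀ := by rw [hc]; linarith [min_le_left c₀ c₁]
  have hcc₁ : 2 * c ≤ c₁ := by rw [hc]; linarith [min_le_right c₀ c₁]
  refine ⟨c / (C + 1), c, by positivity, hcpos, fun η η' hη hlt => ?_⟩
  have hsub := hη.sub hq hs0 hW
  have hae : ∀ᵐ x : ℝ, ‖η' x - f' x‖ ≤ c := by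
    filter_upwards [hemb _ _ hsub] with x hx
    refine hx.trans ?_
    rw [lt_div_iff₀ (by positivity)] at hlt
    nlinarith [sobNorm_nonneg s q (fun u => η u - f u) (fun u => η' u - f' u)]
  have hreg' : ∀ᵐ x : ℝ, c ≤ ‖η' x‖ := by
    filter_upwards [hae, hreg] with x h1 h2
    have := norm_le_norm_add_norm_sub (η' x) (f' x)
    linarith
  have hbil' : ∀ x t : ℝ, 0 ≤ t → t ≤ 2 / 3 → c * t ≤ ‖η (x + t) - η x‖ := by
    intro x t ht ht'
    have h1 := hsub.norm_sub_le_of_ae_bound hq hs0 hae x (x + t)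
    have h2 := hbil x t ht ht'
    rw [add_sub_cancel_left, abs_of_nonneg ht] at h1
    have h3 := norm_le_norm_add_norm_sub (η (x + t) - η x) (f (x + t) - f x)
    rw [show η (x + t) - η x - (f (x + t) - f x) = η (x + t) - f (x + t) - (η x - f x) by abel]
      at h3
    nlinarith
  exact ⟨⟨hη, injCircle_of_mul_le_norm_sub hη.1.periodic hcpos hbil', c, hcpos, hreg'⟩, hreg',
    hbil'⟩

end Campanato

section ChordEstimate

theorem setLIntegral_Ioo_comp_mul {c : ℝ} (hc : 0 < c) (b : ℝ) (f : ℝ → ℝ≥0∞) :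
    ∫⁻ x in Ioo 0 b, f (c * x) = ENNReal.ofReal c⁻¹ * ∫⁻ x in Ioo 0 (c * b), f x := by
  have hpre : (fun x => c * x) ⁻¹' Ioo 0 (c * b) = Ioo 0 b := by
    ext x
    simp only [mem_preimage, mem_Ioo, mul_pos_iff_of_pos_left hc, mul_lt_mul_iff_right₀ hc]
  have hemb : MeasurableEmbedding fun x : ℝ => c * x := measurableEmbedding_mulLeft₀ hc.ne'
  rw [← hpre, ← hemb.lintegral_map, ← hemb.restrict_map, Real.map_volume_mul_left hc.ne',
    Measure.restrict_smul, lintegral_smul_measure, abs_of_pos (inv_pos.2 hc), smul_eq_mul]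

theorem lintegral_beta_lt_top {e : ℝ} (he : -(2 / 3) < e) :
    ∫⁻ σ in Ioo (0 : ℝ) 1, ENNReal.ofReal ((σ * (1 - σ)) ^ e) < ⊤ := by
  have h1 : IntervalIntegrable (fun σ : ℝ => σ ^ (-(2 / 3) : ℝ)) volume 0 1 :=
    intervalIntegral.intervalIntegrable_rpow' (by norm_num)
  have h2 : IntervalIntegrable (fun σ : ℝ => (1 - σ) ^ (-(2 / 3) : ℝ)) volume 0 1 := by
    have := (h1.comp_sub_left 1).symm
    simpa using this
  have h3 := ((intervalIntegrable_iff_integrableOn_Ioo_of_le zero_le_one).1 (h1.add h2)).2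
  refine lt_of_le_of_lt (setLIntegral_mono' measurableSet_Ioo fun σ hσ => ?_) h3
  have hσ0 : 0 < σ := hσ.1
  have hσ1 : 0 < 1 - σ := by linarith [hσ.2]
  rw [← ofReal_norm]
  refine ENNReal.ofReal_le_ofReal ((le_abs_self _).trans' ?_)
  calc (σ * (1 - σ)) ^ e ≤ (σ * (1 - σ)) ^ (-(2 / 3) : ℝ) :=
        Real.rpow_le_rpow_of_exponent_ge (by positivity) (by nlinarith) he.le
    _ = (σ⁻¹ + (1 - σ)⁻¹) ^ (2 / 3 : ℝ) := by
        rw [Real.rpow_neg (by positivity), ← Real.inv_rpow (by positivity)]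
        congr 1
        field_simp
        ring
    _ ≤ σ⁻¹ ^ (2 / 3 : ℝ) + (1 - σ)⁻¹ ^ (2 / 3 : ℝ) :=
        Real.rpow_add_le_add_rpow (by positivity) (by positivity) (by norm_num) (by norm_num)
    _ = σ ^ (-(2 / 3) : ℝ) + (1 - σ) ^ (-(2 / 3) : ℝ) := by
        rw [Real.rpow_neg hσ0.le, Real.rpow_neg hσ1.le, Real.inv_rpow hσ0.le,
          Real.inv_rpow hσ1.le]

theorem lintegral_beta_scaled (e : ℝ) {t : ℝ} (ht : 0 < t) :
    ∫⁻ a in Ioo 0 t, ENNReal.ofReal ((a * (t - a)) ^ e) =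
      ENNReal.ofReal (t ^ (2 * e + 1)) *
        ∫⁻ σ in Ioo (0 : ℝ) 1, ENNReal.ofReal ((σ * (1 - σ)) ^ e) := by
  have h := setLIntegral_Ioo_comp_mul (inv_pos.2 ht) t
    fun σ => ENNReal.ofReal ((σ * (1 - σ)) ^ e)
  rw [inv_inv, inv_mul_cancel₀ ht.ne'] at h
  have e1 : t ^ (2 * e + 1) = t ^ (2 * e) * t := by rw [Real.rpow_add_one ht.ne']
  rw [e1, ENNReal.ofReal_mul (by positivity), mul_assoc, ← h,
    ← lintegral_const_mul' _ _ ENNReal.ofReal_ne_top]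
  refine setLIntegral_congr_fun measurableSet_Ioo fun a ha => ?_
  have ha0 : 0 < a := ha.1
  have ha1 : 0 < t - a := by linarith [ha.2]
  rw [← ENNReal.ofReal_mul (by positivity), Real.rpow_mul ht.le, Real.rpow_two,
    ← Real.mul_rpow (by positivity)]
  · congr 2
    field_simp
  · rw [show 1 - t⁻¹ * a = t⁻¹ * (t - a) by field_simp]
    positivity

theorem setLIntegral_arcDomain_le (e p : ℝ) {ψ : ℝ → ℝ≥0∞} (hψ : Measurable ψ) :
    ∫⁻ d in arcDomain, ENNReal.ofReal ((d.1 * d.2) ^ e * (d.1 + d.2) ^ (-p)) * ψ (d.1 + d.2) ≤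
      (∫⁻ σ in Ioo (0 : ℝ) 1, ENNReal.ofReal ((σ * (1 - σ)) ^ e)) *
        ∫⁻ t in Ioo (0 : ℝ) (2 / 3), ENNReal.ofReal (t ^ (2 * e + 1 - p)) * ψ t := by
  set B := ∫⁻ σ in Ioo (0 : ℝ) 1, ENNReal.ofReal ((σ * (1 - σ)) ^ e)
  set T : Set (ℝ × ℝ) := {z | z.2 ∈ Ioo (0 : ℝ) (2 / 3) ∧ z.1 ∈ Ioo 0 z.2} with hT
  set J : ℝ × ℝ → ℝ≥0∞ := fun z =>
    ENNReal.ofReal ((z.1 * (z.2 - z.1)) ^ e * z.2 ^ (-p)) * ψ z.2 with hJ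
  have hJm : Measurable J := by
    simp only [hJ]
    fun_prop
  have hTm : MeasurableSet T := by
    simp only [hT, mem_Ioo]
    measurability
  have hmp : MeasurePreserving (fun d : ℝ × ℝ => (d.1, d.1 + d.2)) :=
    measurePreserving_prod_add volume volume
  have hsub : arcDomain ⊆ (fun d : ℝ × ℝ => (d.1, d.1 + d.2)) ⁻¹' T := by
    rintro ⟨a, b⟩ ⟨h1, h2, h3, h4⟩
    simp only at h1 h2 h3 h4
    refine ⟨⟨?_, ?_⟩, ?_, ?_⟩ <;> simp only <;> linarith
  calc ∫⁻ d in arcDomain, ENNReal.ofReal ((d.1 * d.2) ^ e * (d.1 + d.2) ^ (-p)) * ψ (d.1 + d.2)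
      = ∫⁻ d in arcDomain, J (d.1, d.1 + d.2) := by
        simp only [hJ, add_sub_cancel_left]
    _ ≤ ∫⁻ d in (fun d : ℝ × ℝ => (d.1, d.1 + d.2)) ⁻¹' T, J (d.1, d.1 + d.2) :=
        lintegral_mono_set hsub
    _ = ∫⁻ z in T, J z := hmp.setLIntegral_comp_preimage hTm hJm
    _ = ∫⁻ t, ∫⁻ a, T.indicator J (a, t) := by
        rw [← lintegral_indicator hTm, Measure.volume_eq_prod,
          lintegral_prod_symm _ (hJm.indicator hTm).aemeasurable]
    _ ≤ ∫⁻ t in Ioo (0 : ℝ) (2 / 3), B * (ENNReal.ofReal (t ^ (2 * e + 1 - p)) * ψ t) := by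
        rw [← lintegral_indicator measurableSet_Ioo]
        refine lintegral_mono fun t => ?_
        by_cases ht : t ∈ Ioo (0 : ℝ) (2 / 3)
        · rw [indicator_of_mem ht]
          have ht0 : 0 < t := ht.1
          have h1 : ∀ a, T.indicator J (a, t) = (Ioo 0 t).indicator (fun a =>
              (ENNReal.ofReal (t ^ (-p)) * ψ t) * ENNReal.ofReal ((a * (t - a)) ^ e)) a := by
            intro a
            by_cases ha : a ∈ Ioo 0 t
            · have haT : (a, t) ∈ T := ⟨ht, ha⟩
              have : 0 ≤ (a * (t - a)) ^ e :=
                Real.rpow_nonneg (mul_nonneg ha.1.le (by linarith [ha.2])) _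
              rw [indicator_of_mem ha, indicator_of_mem haT]
              simp only [hJ]
              rw [ENNReal.ofReal_mul this]
              ring
            · have haT : (a, t) ∉ T := fun h => ha h.2
              rw [indicator_of_notMem ha, indicator_of_notMem haT]
          simp only [h1]
          rw [lintegral_indicator measurableSet_Ioo, lintegral_const_mul _ (by fun_prop),
            lintegral_beta_scaled e ht0]
          refine le_of_eq ?_
          have e1 : t ^ (2 * e + 1 - p) = t ^ (2 * e + 1) * t ^ (-p) := by
            rw [sub_eq_add_neg, Real.rpow_add ht0]
          rw [e1, ENNReal.ofReal_mul (by positivity)]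
          change _ * (_ * B) = _
          ring
        · have h1 : ∀ a, T.indicator J (a, t) = 0 := fun a =>
            indicator_of_notMem (fun h => ht h.1) _
          simp [h1]
    _ = _ := by
        rw [lintegral_const_mul]
        exact Measurable.mul (by fun_prop) hψ

theorem setLIntegral_rpow_neg_mul_comp_le {m : ℝ} (hm : 1 < m) {θ : ℝ} (hθ : 0 < θ) (hθ1 : θ ≤ 1)
    (φ : ℝ → ℝ≥0∞) :
    ∫⁻ t in Ioo (0 : ℝ) (2 / 3), ENNReal.ofReal (t ^ (-m)) * φ (θ / 2 * t) ≤
      ∫⁻ w in Ioo (0 : ℝ) (1 / 2), ENNReal.ofReal (w ^ (-m)) * φ w := by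
  have hc : 0 < θ / 2 := by linarith
  have hc1 : θ / 2 ≤ 1 := by linarith
  have h := setLIntegral_Ioo_comp_mul hc (2 / 3) fun w => ENNReal.ofReal (w ^ (-m)) * φ w
  have e : ∀ t ∈ Ioo (0 : ℝ) (2 / 3), ENNReal.ofReal (t ^ (-m)) * φ (θ / 2 * t) =
      ENNReal.ofReal ((θ / 2) ^ m) * (ENNReal.ofReal ((θ / 2 * t) ^ (-m)) * φ (θ / 2 * t)) := by
    intro t ht
    have ht0 : 0 < t := ht.1
    rw [← mul_assoc, ← ENNReal.ofReal_mul (by positivity), Real.mul_rpow hc.le ht0.le, ← mul_assoc,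
      ← Real.rpow_add hc, add_neg_cancel, Real.rpow_zero, one_mul]
  rw [setLIntegral_congr_fun measurableSet_Ioo e, lintegral_const_mul' _ _ ENNReal.ofReal_ne_top, h,
    ← mul_assoc, ← ENNReal.ofReal_mul (by positivity)]
  have h1 : (θ / 2) ^ m * (θ / 2)⁻¹ ≤ 1 := by
    rw [← Real.rpow_neg_one, ← Real.rpow_add hc]
    exact Real.rpow_le_one hc.le hc1 (by linarith)
  calc _ ≤ 1 * ∫⁻ w in Ioo (0 : ℝ) (θ / 2 * (2 / 3)), ENNReal.ofReal (w ^ (-m)) * φ w := by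
        gcongr
        exact ENNReal.ofReal_le_one.2 h1
    _ ≤ _ := by
        rw [one_mul]
        exact lintegral_mono_set (Ioo_subset_Ioo_right (by linarith))

variable {n : ℕ} {s p q : ℝ} {f f' g : ℝ → EuclideanSpace ℝ (Fin n)}

/-- The `q`-th power of the `L^q` modulus of continuity of a periodic function. -/
def shiftModulus (q : ℝ) (g : ℝ → EuclideanSpace ℝ (Fin n)) (t : ℝ) : ℝ≥0∞ :=
  ∫⁻ u in Ico (0 : ℝ) 1, ‖g (u + t) - g u‖ₑ ^ q

theorem measurable_shiftModulus (hg : Measurable g) : Measurable (shiftModulus q g) := by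
  refine Measurable.lintegral_prod_right' (f := fun x : ℝ × ℝ => ‖g (x.2 + x.1) - g x.2‖ₑ ^ q) ?_
  have h1 : Measurable fun x : ℝ × ℝ => g (x.2 + x.1) := hg.comp (by fun_prop)
  have h2 : Measurable fun x : ℝ × ℝ => g x.2 := hg.comp (by fun_prop)
  exact (h1.sub h2).enorm.pow_const q

theorem lintegral_enorm_sub_eq_shiftModulus (hper : Function.Periodic g 1) (a b : ℝ) :
    ∫⁻ u in Ico (0 : ℝ) 1, ‖g (u + a) - g (u - b)‖ₑ ^ q = shiftModulus q g (a + b) := by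
  have hp : Function.Periodic (fun u => ‖g (u + (a + b)) - g u‖ₑ ^ q) 1 := fun u => by
    simp only [add_right_comm u 1, hper _]
  rw [shiftModulus, ← setLIntegral_Ico_comp_add_of_periodic hp (-b)]
  refine lintegral_congr fun u => ?_
  congr 4
  ring

theorem shiftModulus_two_mul_le (hq : 1 < q) (hg : Measurable g) (hper : Function.Periodic g 1)
    (t : ℝ) : shiftModulus q g (t + t) ≤ 2 ^ q * shiftModulus q g t := by
  have hq0 : 0 ≤ q := by linarith
  have hm : ∀ a : ℝ, Measurable fun u => g (u + a) := fun a => hg.comp (measurable_add_const a)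
  rw [← lintegral_enorm_sub_eq_shiftModulus hper]
  have h1 : ∀ u, ‖g (u + t) - g (u - t)‖ₑ ^ q ≤
      2 ^ (q - 1) * (‖g (u + t) - g u‖ₑ ^ q + ‖g (u + 0) - g (u - t)‖ₑ ^ q) := by
    intro u
    refine le_trans ?_ (ENNReal.rpow_add_le_mul_rpow_add_rpow _ _ hq.le)
    refine ENNReal.rpow_le_rpow ?_ hq0
    rw [add_zero, ← sub_add_sub_cancel (g (u + t)) (g u)]
    exact enorm_add_le _ _
  have hc : (2 : ℝ≥0∞) ^ (q - 1) ≠ ⊤ :=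
    (ENNReal.rpow_lt_top_of_nonneg (by linarith) (by simp)).ne
  refine (lintegral_mono h1).trans ?_
  have hm1 : Measurable fun u => ‖g (u + t) - g u‖ₑ ^ q := ((hm t).sub hg).enorm.pow_const q
  rw [lintegral_const_mul' _ _ hc, lintegral_add_left hm1, lintegral_enorm_sub_eq_shiftModulus hper, zero_add,
    ← shiftModulus, ← two_mul, ← mul_assoc]
  refine le_of_eq ?_
  congr 1
  nth_rewrite 2 [← ENNReal.rpow_one 2]
  rw [← ENNReal.rpow_add _ _ (by simp) (by simp), sub_add_cancel]

theorem setLIntegral_shiftModulus_le (hq : 0 < q) (hg : Measurable g) :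
    ∫⁻ w in Ioo (0 : ℝ) (1 / 2), ENNReal.ofReal (w ^ (-(1 + q * s))) * shiftModulus q g w ≤
      sobSemiPow s q g := by
  have hm := measurable_slobodeckiiDensity (s := s) (q := q) hg
  rw [sobSemiPow_eq, lintegral_lintegral_swap hm.aemeasurable]
  refine le_trans ?_ (lintegral_mono_set (s := Ioo (0 : ℝ) (1 / 2)) fun w hw =>
    ⟨by linarith [hw.1], hw.2.le⟩)
  refine setLIntegral_mono' measurableSet_Ioo fun w hw => ?_
  rw [shiftModulus, ← lintegral_const_mul' _ _ ENNReal.ofReal_ne_top]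
  refine lintegral_mono fun u => le_of_eq ?_
  simp only [slobodeckiiDensity]
  rw [abs_of_pos hw.1, ← ofReal_norm_rpow_eq _ hq.le, div_eq_mul_inv, ← Real.rpow_neg hw.1.le,
    mul_comm, ← ENNReal.ofReal_mul (by positivity)]

end ChordEstimate

section ChordEstimate

variable {n : ℕ} {s p q : ℝ} {f f' : ℝ → EuclideanSpace ℝ (Fin n)}

/-- The difference quotient over the arc following the base point. -/
def chordRight (f : ℝ → EuclideanSpace ℝ (Fin n)) (x : ℝ × ℝ × ℝ) : EuclideanSpace ℝ (Fin n) :=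
  x.2.1⁻¹ • (f (x.1 + x.2.1) - f x.1)

/-- The difference quotient over the arc preceding the base point. -/
def chordLeft (f : ℝ → EuclideanSpace ℝ (Fin n)) (x : ℝ × ℝ × ℝ) : EuclideanSpace ℝ (Fin n) :=
  x.2.2⁻¹ • (f x.1 - f (x.1 - x.2.2))

/-- The difference quotient over the union of both arcs. -/
def chordOuter (f : ℝ → EuclideanSpace ℝ (Fin n)) (x : ℝ × ℝ × ℝ) : EuclideanSpace ℝ (Fin n) :=
  (x.2.1 + x.2.2)⁻¹ • (f (x.1 + x.2.1) - f (x.1 - x.2.2))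

/-- The weight turning the difference of chords into an `L^q` function. -/
def chordWeight (p q : ℝ) (x : ℝ × ℝ × ℝ) : ℝ :=
  (x.2.1 * x.2.2) ^ ((q - p) / q) * (x.2.1 + x.2.2) ^ (-p / q)

/-- The weighted difference of the two chords meeting at the base point. -/
def weightedBend (p q : ℝ) (f : ℝ → EuclideanSpace ℝ (Fin n)) (x : ℝ × ℝ × ℝ) :
    EuclideanSpace ℝ (Fin n) :=
  chordWeight p q x • (chordRight f x - chordLeft f x)

theorem chordWeight_rpow (hq : 0 < q) {x : ℝ × ℝ × ℝ} (ha : 0 < x.2.1) (hb : 0 < x.2.2) :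
    chordWeight p q x ^ q = (x.2.1 * x.2.2) ^ (q - p) * (x.2.1 + x.2.2) ^ (-p) := by
  rw [chordWeight, Real.mul_rpow (by positivity) (by positivity), ← Real.rpow_mul (by positivity),
    ← Real.rpow_mul (by positivity), div_mul_cancel₀ _ hq.ne', div_mul_cancel₀ _ hq.ne']

theorem InW.enorm_chordRight_sub_chordLeft_rpow_le (hq : 1 < q) (hs : 0 ≤ s) (h : InW s q f f')
    {x : ℝ × ℝ × ℝ} (ha : 0 < x.2.1) (hb : 0 < x.2.2) :
    ‖chordRight f x - chordLeft f x‖ₑ ^ q ≤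
      ∫⁻ θ in Ioc (0 : ℝ) 1, ‖f' (x.1 + x.2.1 * θ) - f' (x.1 - x.2.2 * θ)‖ₑ ^ q := by
  obtain ⟨u, a, b⟩ := x
  simp only at ha hb
  have i1 : IntervalIntegrable (fun θ => f' (u + a * θ)) volume 0 1 := by
    have := ((h.intervalIntegrable hq hs u (u + a)).comp_add_left u).comp_mul_left (c := a)
    simpa [ha.ne'] using this
  have i2 : IntervalIntegrable (fun θ => f' (u - b * θ)) volume 0 1 := by
    have := ((h.intervalIntegrable hq hs u (u - b)).comp_sub_left u).comp_mul_left (c := b)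
    simpa [hb.ne'] using this
  have e1 : chordRight f (u, a, b) = ∫ θ in (0 : ℝ)..1, f' (u + a * θ) := by
    rw [intervalIntegral.integral_comp_add_mul _ ha.ne', chordRight, h.sub_eq_integral hq hs]
    simp
  have e2 : chordLeft f (u, a, b) = ∫ θ in (0 : ℝ)..1, f' (u - b * θ) := by
    rw [intervalIntegral.integral_comp_sub_mul _ hb.ne', chordLeft, h.sub_eq_integral hq hs]
    simp
  have : IsProbabilityMeasure (volume.restrict (Ioc (0 : ℝ) 1)) := ⟨by simp⟩
  rw [e1, e2, ← intervalIntegral.integral_sub i1 i2, intervalIntegral.integral_of_le zero_le_one]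
  refine (ENNReal.rpow_le_rpow (enorm_integral_le_lintegral_enorm _) (by linarith)).trans
    (rpow_lintegral_le_lintegral_rpow _ hq ?_)
  exact ((h.1.meas'.comp (by fun_prop)).sub (h.1.meas'.comp (by fun_prop))).enorm.aemeasurable

theorem ae_arcMeasure_mem : ∀ᵐ x ∂arcMeasure, x.2 ∈ arcDomain := by
  rw [arcMeasure]
  exact Measure.quasiMeasurePreserving_snd.ae (ae_restrict_mem measurableSet_arcDomain)

/-- The weighted difference of chords is controlled in `L^q` by the Sobolev–Slobodeckiĭ seminorm. -/
theorem exists_lintegral_weightedBend_le (n : ℕ) (hq : 1 < q) (hp₁ : 2 / 3 * q + 1 < p)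
    (hp₂ : p < q + 2 / 3) :
    ∃ C : ℝ≥0∞, C ≠ ⊤ ∧ ∀ f f' : ℝ → EuclideanSpace ℝ (Fin n), InW ((3*p-2*q-2)/q) q f f' →
      ∫⁻ x, ‖weightedBend p q f x‖ₑ ^ q ∂arcMeasure ≤ C * sobSemiPow ((3*p-2*q-2)/q) q f' := by
  have hq0 : 0 < q := by linarith
  set s := (3*p-2*q-2)/q with hs
  have hqs : 1 + q * s = 3 * p - 2 * q - 1 := by rw [hs]; field_simp; ring
  have hs0 : 0 ≤ s := div_nonneg (by linarith) hq0.le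
  set B := ∫⁻ σ in Ioo (0 : ℝ) 1, ENNReal.ofReal ((σ * (1 - σ)) ^ (q - p)) with hB
  have hBt : B ≠ ⊤ := (lintegral_beta_lt_top (by linarith)).ne
  have h2t : (2 : ℝ≥0∞) ^ q ≠ ⊤ := (ENNReal.rpow_lt_top_of_nonneg hq0.le (by simp)).ne
  refine ⟨B * 2 ^ q, ENNReal.mul_ne_top hBt h2t, fun f f' h => ?_⟩
  set φ := shiftModulus q f' with hφ
  have hφm : Measurable φ := measurable_shiftModulus h.1.meas'
  set ψ : ℝ → ℝ≥0∞ := fun t => ∫⁻ θ in Ioc (0 : ℝ) 1, φ (θ * t) with hψ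
  have hψm : Measurable ψ := by
    refine Measurable.lintegral_prod_right' (f := fun x : ℝ × ℝ => φ (x.2 * x.1)) ?_
    exact hφm.comp (by fun_prop)
  have hdm : Measurable fun x : (ℝ × ℝ × ℝ) × ℝ =>
      ‖f' (x.1.1 + x.1.2.1 * x.2) - f' (x.1.1 - x.1.2.2 * x.2)‖ₑ ^ q :=
    ((h.1.meas'.comp (by fun_prop)).sub (h.1.meas'.comp (by fun_prop))).enorm.pow_const q
  have hDm : Measurable fun x : ℝ × ℝ × ℝ => ∫⁻ θ in Ioc (0 : ℝ) 1,
      ‖f' (x.1 + x.2.1 * θ) - f' (x.1 - x.2.2 * θ)‖ₑ ^ q := hdm.lintegral_prod_right'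
  calc ∫⁻ x, ‖weightedBend p q f x‖ₑ ^ q ∂arcMeasure
      ≤ ∫⁻ x : ℝ × ℝ × ℝ, ENNReal.ofReal ((x.2.1 * x.2.2) ^ (q - p) * (x.2.1 + x.2.2) ^ (-p)) *
          (∫⁻ θ in Ioc (0 : ℝ) 1, ‖f' (x.1 + x.2.1 * θ) - f' (x.1 - x.2.2 * θ)‖ₑ ^ q)
            ∂arcMeasure := by
        refine lintegral_mono_ae ?_
        filter_upwards [ae_arcMeasure_mem] with x hx
        rw [weightedBend, enorm_smul, ENNReal.mul_rpow_of_nonneg _ _ hq0.le]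
        have hw : 0 ≤ chordWeight p q x := by
          have h1 := hx.1
          have h2 := hx.2.1
          unfold chordWeight
          positivity
        rw [← chordWeight_rpow hq0 hx.1 hx.2.1, Real.enorm_of_nonneg hw,
          ENNReal.ofReal_rpow_of_nonneg hw hq0.le]
        gcongr
        exact h.enorm_chordRight_sub_chordLeft_rpow_le hq hs0 hx.1 hx.2.1
    _ = ∫⁻ d in arcDomain, ENNReal.ofReal ((d.1 * d.2) ^ (q - p) * (d.1 + d.2) ^ (-p)) *
          ψ (d.1 + d.2) := by
        have hFm : Measurable fun x : ℝ × ℝ × ℝ =>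
            ENNReal.ofReal ((x.2.1 * x.2.2) ^ (q - p) * (x.2.1 + x.2.2) ^ (-p)) *
              ∫⁻ θ in Ioc (0 : ℝ) 1, ‖f' (x.1 + x.2.1 * θ) - f' (x.1 - x.2.2 * θ)‖ₑ ^ q :=
          Measurable.mul (by fun_prop) hDm
        rw [arcMeasure, lintegral_prod_symm _ hFm.aemeasurable]
        refine lintegral_congr fun d => ?_
        simp only
        rw [lintegral_const_mul' _ _ ENNReal.ofReal_ne_top]
        congr 1
        have hm' : Measurable fun x : ℝ × ℝ =>
            ‖f' (x.1 + d.1 * x.2) - f' (x.1 - d.2 * x.2)‖ₑ ^ q :=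
          ((h.1.meas'.comp (by fun_prop)).sub (h.1.meas'.comp (by fun_prop))).enorm.pow_const q
        rw [lintegral_lintegral_swap hm'.aemeasurable]
        refine lintegral_congr fun θ => ?_
        rw [lintegral_enorm_sub_eq_shiftModulus h.1.periodic']
        congr 1
        ring
    _ ≤ B * ∫⁻ t in Ioo (0 : ℝ) (2 / 3), ENNReal.ofReal (t ^ (2 * (q - p) + 1 - p)) * ψ t :=
        setLIntegral_arcDomain_le _ _ hψm
    _ = B * ∫⁻ θ in Ioc (0 : ℝ) 1, ∫⁻ t in Ioo (0 : ℝ) (2 / 3),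
          ENNReal.ofReal (t ^ (-(1 + q * s))) * φ (θ * t) := by
        congr 1
        have hm' : Measurable fun x : ℝ × ℝ =>
            ENNReal.ofReal (x.2 ^ (-(1 + q * s))) * φ (x.1 * x.2) :=
          Measurable.mul (by fun_prop) (hφm.comp (by fun_prop))
        rw [lintegral_lintegral_swap hm'.aemeasurable]
        refine lintegral_congr fun t => ?_
        rw [lintegral_const_mul' _ _ ENNReal.ofReal_ne_top, hqs]
        congr 3
        ring
    _ ≤ B * ∫⁻ θ in Ioc (0 : ℝ) 1, 2 ^ q * sobSemiPow s q f' := by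
        gcongr B * ?_
        refine setLIntegral_mono' measurableSet_Ioc fun θ hθ => ?_
        calc _ ≤ ∫⁻ t in Ioo (0 : ℝ) (2 / 3),
              2 ^ q * (ENNReal.ofReal (t ^ (-(1 + q * s))) * φ (θ / 2 * t)) := by
              refine lintegral_mono fun t => ?_
              have := shiftModulus_two_mul_le hq h.1.meas' h.1.periodic' (θ / 2 * t)
              rw [show θ / 2 * t + θ / 2 * t = θ * t by ring] at this
              rw [mul_left_comm]
              gcongr
            _ = 2 ^ q * ∫⁻ t in Ioo (0 : ℝ) (2 / 3),
              ENNReal.ofReal (t ^ (-(1 + q * s))) * φ (θ / 2 * t) :=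
              lintegral_const_mul' _ _ h2t
            _ ≤ _ := by
              gcongr
              exact (setLIntegral_rpow_neg_mul_comp_le (by linarith) hθ.1 hθ.2 φ).trans
                (setLIntegral_shiftModulus_le hq0 h.1.meas')
    _ = _ := by
        rw [setLIntegral_const]
        simp [mul_assoc]

end ChordEstimate

section IntegralFunctional

variable {X : Type*} [MeasurableSpace X] {μ : Measure X}
variable {V : Type*} [NormedAddCommGroup V] {p q A c M : ℝ}

/-- The `L^q` norm as a real number. -/
def lqNorm (q : ℝ) (μ : Measure X) (κ : X → V) : ℝ := (∫ x, ‖κ x‖ ^ q ∂μ) ^ (1 / q)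

theorem lqNorm_nonneg (q : ℝ) (μ : Measure X) (κ : X → V) : 0 ≤ lqNorm q μ κ := by
  unfold lqNorm; positivity

theorem integral_norm_rpow_eq (hq : 0 < q) (κ : X → V) :
    ∫ x, ‖κ x‖ ^ q ∂μ = lqNorm q μ κ ^ q := by
  rw [lqNorm, ← Real.rpow_mul (by positivity), one_div_mul_cancel hq.ne', Real.rpow_one]

theorem integrable_norm_rpow (hq : 0 < q) {κ : X → V} (hκ : MemLp κ (ENNReal.ofReal q) μ) :
    Integrable (fun x => ‖κ x‖ ^ q) μ := by
  have := hκ.integrable_norm_rpow (by simpa using hq) ENNReal.ofReal_ne_top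
  rwa [ENNReal.toReal_ofReal hq.le] at this

variable {Z : Type*} [NormedAddCommGroup Z] {a : X → Z} {b κ : X → V}

theorem memLp_norm_rpow_sub_one (hq : 1 < q) (hκ : MemLp κ (ENNReal.ofReal q) μ) :
    MemLp (fun x => ‖κ x‖ ^ (q - 1)) (ENNReal.ofReal (q / (q - 1))) μ := by
  have := hκ.norm_rpow_div (ENNReal.ofReal (q - 1))
  rwa [ENNReal.toReal_ofReal (by linarith), ← ENNReal.ofReal_div_of_pos (by linarith)] at this

theorem holderConjugate_div_sub_one (hq : 1 < q) : (q / (q - 1)).HolderConjugate q :=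
  (Real.HolderConjugate.conjExponent hq).symm

theorem integrable_norm_rpow_sub_one_mul (hq : 1 < q) (hκ : MemLp κ (ENNReal.ofReal q) μ)
    (hb : MemLp b (ENNReal.ofReal q) μ) :
    Integrable (fun x => ‖κ x‖ ^ (q - 1) * ‖b x‖) μ := by
  have : ENNReal.HolderTriple (ENNReal.ofReal (q / (q - 1))) (ENNReal.ofReal q) 1 :=
    (holderConjugate_div_sub_one hq).ennrealOfReal
  exact (memLp_norm_rpow_sub_one hq hκ).integrable_mul hb.norm

theorem integral_norm_rpow_sub_one_mul_le (hq : 1 < q) (hκ : MemLp κ (ENNReal.ofReal q) μ)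
    (hb : MemLp b (ENNReal.ofReal q) μ) :
    ∫ x, ‖κ x‖ ^ (q - 1) * ‖b x‖ ∂μ ≤ lqNorm q μ κ ^ (q - 1) * lqNorm q μ b := by
  have hq1 : q - 1 ≠ 0 := by linarith
  have hq0 : q ≠ 0 := by linarith
  have h := integral_mul_le_Lp_mul_Lq_of_nonneg (holderConjugate_div_sub_one hq)
    (ae_of_all μ fun x => Real.rpow_nonneg (norm_nonneg (κ x)) (q - 1))
    (ae_of_all μ fun x => norm_nonneg (b x)) (memLp_norm_rpow_sub_one hq hκ) hb.norm
  refine h.trans_eq ?_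
  congr 1
  rw [lqNorm, ← Real.rpow_mul (by positivity)]
  congr 2
  · ext x
    rw [← Real.rpow_mul (norm_nonneg _), mul_div_cancel₀ _ hq1]
  · field_simp

theorem integrable_majorant (hq : 1 < q) (ham : AEStronglyMeasurable a μ)
    (ha : ∀ᵐ x ∂μ, ‖a x‖ ≤ A) (hκ : MemLp κ (ENNReal.ofReal q) μ)
    (hb : MemLp b (ENNReal.ofReal q) μ) :
    Integrable (fun x => ‖κ x‖ ^ q * ‖a x‖ + ‖κ x‖ ^ (q - 1) * ‖b x‖) μ := by
  refine Integrable.add ?_ (integrable_norm_rpow_sub_one_mul hq hκ hb)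
  refine (integrable_norm_rpow (by linarith) hκ).mul_bdd (c := A) ham.norm ?_
  simpa using ha

theorem integral_majorant_le (hq : 1 < q) (ham : AEStronglyMeasurable a μ)
    (ha : ∀ᵐ x ∂μ, ‖a x‖ ≤ A) (hκ : MemLp κ (ENNReal.ofReal q) μ)
    (hb : MemLp b (ENNReal.ofReal q) μ) :
    ∫ x, (‖κ x‖ ^ q * ‖a x‖ + ‖κ x‖ ^ (q - 1) * ‖b x‖) ∂μ ≤
      lqNorm q μ κ ^ q * A + lqNorm q μ κ ^ (q - 1) * lqNorm q μ b := by
  have hκi := integrable_norm_rpow (by linarith) hκ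
  have h1 : Integrable (fun x => ‖κ x‖ ^ q * ‖a x‖) μ :=
    hκi.mul_bdd (c := A) ham.norm (by simpa using ha)
  rw [integral_add h1 (integrable_norm_rpow_sub_one_mul hq hκ hb)]
  refine add_le_add ?_ (integral_norm_rpow_sub_one_mul_le hq hκ hb)
  rw [← integral_norm_rpow_eq (by linarith), ← integral_mul_const]
  refine integral_mono_ae h1 (hκi.mul_const A) ?_
  filter_upwards [ha] with x hx
  gcongr

end IntegralFunctional

section DensityBound

variable {V : Type*} [NormedAddCommGroup V] [InnerProductSpace ℝ V] {p q c M : ℝ}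

theorem mengerDensity_le (hp : 0 ≤ p) (hq : 0 ≤ q) (hc : 0 < c) {ξ : Fin 6 → V}
    (hξ : ξ ∈ normShell V c M) (κ : V) :
    mengerDensity p q (ξ, κ) ≤ M * M * M * M ^ q / (c * c * c) ^ p * ‖κ‖ ^ q := by
  have hM : 0 ≤ M := (norm_nonneg _).trans (hξ 0).2
  have hrej : ‖scaledRejection (ξ 3) κ‖ ≤ M * ‖κ‖ := by
    rw [norm_scaledRejection (ne_zero_of_mem_normShell hc hξ 3)]
    refine Real.sqrt_le_iff.2 ⟨by positivity, ?_⟩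
    have := (hξ 3).2
    rw [mul_pow]
    nlinarith [sq_nonneg (inner ℝ (ξ 3) κ), mul_le_mul_of_nonneg_right
      (pow_le_pow_left₀ (norm_nonneg _) this 2) (sq_nonneg ‖κ‖)]
  have h0 := (hξ 0).2
  have h1 := (hξ 1).2
  have h2 := (hξ 2).2
  have h3 := (hξ 3).1
  have h4 := (hξ 4).1
  have h5 := (hξ 5).1
  calc mengerDensity p q (ξ, κ) ≤ M * M * M * (M * ‖κ‖) ^ q / (c * c * c) ^ p := by
        unfold mengerDensity
        dsimp only
        gcongr
    _ = _ := by rw [Real.mul_rpow hM (norm_nonneg _)]; ring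

end DensityBound

section DensityIntegral

variable {X : Type*} [MeasurableSpace X] {μ : Measure X}
variable {V : Type*} [NormedAddCommGroup V] [InnerProductSpace ℝ V] [FiniteDimensional ℝ V]
  [MeasurableSpace V] [BorelSpace V] {p q A c M : ℝ}
variable {ξ a : X → Fin 6 → V} {κ b : X → V}

theorem aestronglyMeasurable_fderiv_mengerDensity (hξ : Measurable ξ) (hκ : Measurable κ)
    (ha : Measurable a) (hb : Measurable b) :
    AEStronglyMeasurable (fun x => fderiv ℝ (mengerDensity p q) (ξ x, κ x) (a x, b x)) μ := by
  have h1 : Measurable fun x => fderiv ℝ (mengerDensity p q) (ξ x, κ x) :=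
    (measurable_fderiv ℝ (mengerDensity p q)).comp (hξ.prodMk hκ)
  exact isBoundedBilinearMap_apply.continuous.comp_aestronglyMeasurable
    (h1.aestronglyMeasurable.prodMk (ha.prodMk hb).aestronglyMeasurable)

theorem measurable_mengerDensity_comp (hξ : Measurable ξ) (hκ : Measurable κ) :
    Measurable fun x => mengerDensity p q (ξ x, κ x) := by
  have h : ∀ i, Measurable fun x => ξ x i := fun i => (measurable_pi_apply i).comp hξ
  simp only [mengerDensity, scaledRejection]
  fun_prop

theorem integrable_mengerDensity (hp : 0 ≤ p) (hq : 0 < q) (hc : 0 < c) (hξm : Measurable ξ)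
    (hξ : ∀ᵐ x ∂μ, ξ x ∈ normShell V c M) (hκm : Measurable κ)
    (hκ : MemLp κ (ENNReal.ofReal q) μ) :
    Integrable (fun x => mengerDensity p q (ξ x, κ x)) μ := by
  refine Integrable.mono' ((integrable_norm_rpow hq hκ).const_mul
    (M * M * M * M ^ q / (c * c * c) ^ p))
    (measurable_mengerDensity_comp hξm hκm).aestronglyMeasurable ?_
  filter_upwards [hξ] with x hx
  rw [Real.norm_of_nonneg (mengerDensity_nonneg _ _ _)]
  exact mengerDensity_le hp hq.le hc hx _

theorem integrable_fderiv_mengerDensity (hq : 1 < q) (hc : 0 < c) (hξm : Measurable ξ)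
    (hξ : ∀ᵐ x ∂μ, ξ x ∈ normShell V c M) (hκm : Measurable κ)
    (hκ : MemLp κ (ENNReal.ofReal q) μ) (ham : Measurable a) (ha : ∀ᵐ x ∂μ, ‖a x‖ ≤ A)
    (hbm : Measurable b) (hb : MemLp b (ENNReal.ofReal q) μ) :
    Integrable (fun x => fderiv ℝ (mengerDensity p q) (ξ x, κ x) (a x, b x)) μ := by
  obtain ⟨C, hC0, hC⟩ := exists_fderiv_mengerDensity_bound (V := V) p hq hc M
  refine Integrable.mono'
    ((integrable_majorant hq ham.aestronglyMeasurable ha hκ hb).const_mul C)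
    (aestronglyMeasurable_fderiv_mengerDensity hξm hκm ham hbm) ?_
  filter_upwards [hξ] with x hx
  exact hC _ hx _ _ _

theorem exists_abs_integral_fderiv_mengerDensity_le (μ : Measure X) (p : ℝ) (hq : 1 < q)
    (hc : 0 < c) (M : ℝ) :
    ∃ C, 0 ≤ C ∧ ∀ (ξ a : X → Fin 6 → V) (κ b : X → V) (A : ℝ),
      (∀ᵐ x ∂μ, ξ x ∈ normShell V c M) → MemLp κ (ENNReal.ofReal q) μ → Measurable a →
      (∀ᵐ x ∂μ, ‖a x‖ ≤ A) → MemLp b (ENNReal.ofReal q) μ →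
      |∫ x, fderiv ℝ (mengerDensity p q) (ξ x, κ x) (a x, b x) ∂μ| ≤
        C * (lqNorm q μ κ ^ q * A + lqNorm q μ κ ^ (q - 1) * lqNorm q μ b) := by
  obtain ⟨C, hC0, hC⟩ := exists_fderiv_mengerDensity_bound (V := V) p hq hc M
  refine ⟨C, hC0, fun ξ a κ b A hξ hκ ham ha hb => ?_⟩
  have hi := integrable_majorant hq ham.aestronglyMeasurable ha hκ hb
  rw [← Real.norm_eq_abs]
  calc _ ≤ ∫ x, C * (‖κ x‖ ^ q * ‖a x‖ + ‖κ x‖ ^ (q - 1) * ‖b x‖) ∂μ := by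
        refine norm_integral_le_of_norm_le (hi.const_mul C) ?_
        filter_upwards [hξ] with x hx
        exact hC _ hx _ _ _
    _ ≤ _ := by
        rw [integral_const_mul]
        gcongr
        exact integral_majorant_le hq ham.aestronglyMeasurable ha hκ hb

theorem exists_abs_integral_fderiv_mengerDensity_sub_le (μ : Measure X) (p : ℝ) (hq : 1 < q)
    (hc : 0 < c) (M : ℝ) {ε : ℝ} (hε : 0 < ε) :
    ∃ δ, 0 < δ ∧ ∃ C, 0 ≤ C ∧ ∀ (ξ ξ' a : X → Fin 6 → V) (κ κ' b : X → V) (A : ℝ),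
      Measurable ξ → Measurable ξ' → Measurable κ → Measurable κ' → Measurable b →
      (∀ᵐ x ∂μ, ξ x ∈ normShell V c M) → (∀ᵐ x ∂μ, ξ' x ∈ normShell V c M) →
      (∀ᵐ x ∂μ, ‖ξ' x - ξ x‖ < δ) →
      MemLp κ (ENNReal.ofReal q) μ → MemLp κ' (ENNReal.ofReal q) μ → Measurable a →
      (∀ᵐ x ∂μ, ‖a x‖ ≤ A) → MemLp b (ENNReal.ofReal q) μ →
      |∫ x, fderiv ℝ (mengerDensity p q) (ξ' x, κ' x) (a x, b x) ∂μ -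
          ∫ x, fderiv ℝ (mengerDensity p q) (ξ x, κ x) (a x, b x) ∂μ| ≤
        ε * (lqNorm q μ κ ^ q * A + lqNorm q μ κ ^ (q - 1) * lqNorm q μ b) +
        C * (lqNorm q μ (κ' - κ) ^ q * A + lqNorm q μ (κ' - κ) ^ (q - 1) * lqNorm q μ b) := by
  obtain ⟨δ, hδ, C, hC0, hC⟩ := exists_fderiv_mengerDensity_sub_bound (V := V) p hq hc M hε
  refine ⟨δ, hδ, C, hC0, fun ξ ξ' a κ κ' b A hξm hξm' hκm hκm' hbm hξ hξ' hsub hκ hκ' ham ha hb => ?_⟩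
  have hi := integrable_majorant hq ham.aestronglyMeasurable ha hκ hb
  have hi' := integrable_majorant hq ham.aestronglyMeasurable ha (hκ'.sub hκ) hb
  rw [← integral_sub (integrable_fderiv_mengerDensity hq hc hξm' hξ' hκm' hκ' ham ha hbm hb)
    (integrable_fderiv_mengerDensity hq hc hξm hξ hκm hκ ham ha hbm hb)]
  rw [← Real.norm_eq_abs]
  calc _ ≤ ∫ x, (ε * (‖κ x‖ ^ q * ‖a x‖ + ‖κ x‖ ^ (q - 1) * ‖b x‖) +
        C * (‖(κ' - κ) x‖ ^ q * ‖a x‖ + ‖(κ' - κ) x‖ ^ (q - 1) * ‖b x‖)) ∂μ := by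
        refine norm_integral_le_of_norm_le ((hi.const_mul ε).add (hi'.const_mul C)) ?_
        filter_upwards [hξ, hξ', hsub] with x hx hx' hd
        exact hC _ hx _ hx' hd _ _ _ _
    _ ≤ _ := by
        rw [integral_add (hi.const_mul ε) (hi'.const_mul C), integral_const_mul,
          integral_const_mul]
        gcongr
        · exact integral_majorant_le hq ham.aestronglyMeasurable ha hκ hb
        · exact integral_majorant_le hq ham.aestronglyMeasurable ha (hκ'.sub hκ) hb

theorem hasDerivAt_integral_mengerDensity (hp : 0 ≤ p) (hq : 1 < q) (hc : 0 < c)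
    (hξm : Measurable ξ) (hξ : ∀ᵐ x ∂μ, ξ x ∈ normShell V c M) (hκm : Measurable κ)
    (hκ : MemLp κ (ENNReal.ofReal q) μ) (ham : Measurable a) (ha : ∀ᵐ x ∂μ, ‖a x‖ ≤ A)
    (hbm : Measurable b) (hb : MemLp b (ENNReal.ofReal q) μ) :
    HasDerivAt (fun τ : ℝ => ∫ x, mengerDensity p q (ξ x + τ • a x, κ x + τ • b x) ∂μ)
      (∫ x, fderiv ℝ (mengerDensity p q) (ξ x, κ x) (a x, b x) ∂μ) 0 := by
  have hq0 : 0 < q := by linarith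
  set B := |A| + 1 with hB
  have hB0 : 0 < B := by positivity
  obtain ⟨C, hC0, hC⟩ := exists_fderiv_mengerDensity_bound (V := V) p hq (half_pos hc) (M + c / 2)
  set r := min 1 (c / 2 / B) with hr
  have hr0 : 0 < r := lt_min one_pos (by positivity)
  have hm : ∀ τ : ℝ, Measurable fun x => ξ x + τ • a x := fun τ => hξm.add (ham.const_smul τ)
  have hm' : ∀ τ : ℝ, Measurable fun x => κ x + τ • b x := fun τ => hκm.add (hbm.const_smul τ)
  have hshell : ∀ᵐ x ∂μ, ∀ τ ∈ Metric.ball (0 : ℝ) r,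
      ξ x + τ • a x ∈ normShell V (c / 2) (M + c / 2) := by
    filter_upwards [hξ, ha] with x hx hax τ hτ i
    have hτr : |τ| < r := by simpa using hτ
    have h1 : ‖τ • a x i‖ ≤ c / 2 := by
      rw [norm_smul, Real.norm_eq_abs]
      have h2 : ‖a x i‖ ≤ B := (norm_le_pi_norm (a x) i).trans
        (hax.trans ((le_abs_self A).trans (by linarith)))
      calc |τ| * ‖a x i‖ ≤ c / 2 / B * B := by
            gcongr
            exact hτr.le.trans (min_le_right _ _)
        _ = c / 2 := by field_simp
    have hxi := hx i
    rw [Pi.add_apply, Pi.smul_apply]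
    have h3 := norm_sub_le (ξ x i + τ • a x i) (τ • a x i)
    rw [add_sub_cancel_right] at h3
    exact ⟨by linarith, (norm_add_le _ _).trans (by linarith)⟩
  have hsum : MemLp (fun x => ‖κ x‖ + ‖b x‖) (ENNReal.ofReal q) μ := hκ.norm.add hb.norm
  have hbound := integrable_norm_rpow hq0 hsum
  have key := hasDerivAt_integral_of_dominated_loc_of_deriv_le (μ := μ)
    (F := fun τ x => mengerDensity p q (ξ x + τ • a x, κ x + τ • b x))
    (F' := fun τ x => fderiv ℝ (mengerDensity p q) (ξ x + τ • a x, κ x + τ • b x) (a x, b x))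
    (bound := fun x => C * (B + 1) * ‖‖κ x‖ + ‖b x‖‖ ^ q)
    (Metric.ball_mem_nhds (0 : ℝ) hr0)
    (Eventually.of_forall fun τ =>
      (measurable_mengerDensity_comp (hm τ) (hm' τ)).aestronglyMeasurable)
    (by simpa using integrable_mengerDensity hp hq0 hc hξm hξ hκm hκ)
    (aestronglyMeasurable_fderiv_mengerDensity (hm 0) (hm' 0) ham hbm)
    ?_ (hbound.const_mul _) ?_
  · simpa using key.2
  · filter_upwards [hshell, ha] with x hx hax τ hτ
    have hτ1 : |τ| ≤ 1 := by
      have : |τ| < r := by simpa using hτ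
      exact this.le.trans (min_le_left _ _)
    refine (hC _ (hx τ hτ) _ _ _).trans ?_
    rw [mul_assoc]
    refine mul_le_mul_of_nonneg_left ?_ hC0
    rw [Real.norm_of_nonneg (by positivity : (0 : ℝ) ≤ ‖κ x‖ + ‖b x‖)]
    set S := ‖κ x‖ + ‖b x‖ with hS
    have hS0 : 0 ≤ S := by positivity
    have hle : ‖κ x + τ • b x‖ ≤ S := by
      refine (norm_add_le _ _).trans ?_
      rw [norm_smul, Real.norm_eq_abs, hS]
      nlinarith [norm_nonneg (b x)]
    have hbS : ‖b x‖ ≤ S := by rw [hS]; linarith [norm_nonneg (κ x)]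
    have haB : ‖a x‖ ≤ B := hax.trans ((le_abs_self A).trans (by linarith))
    have hSq : S ^ (q - 1) * S = S ^ q := by
      rw [← Real.rpow_add_one' hS0 (by linarith)]
      congr 1
      ring
    calc _ ≤ S ^ q * B + S ^ (q - 1) * S := by
          gcongr
      _ = (B + 1) * S ^ q := by rw [hSq]; ring
  · filter_upwards [hshell] with x hx τ hτ
    have hd := (differentiableAt_mengerDensity (p := p) hq (half_pos hc) (hx τ hτ)
      (κ x + τ • b x)).hasFDerivAt
    have h1 : HasDerivAt (fun τ : ℝ => ξ x + τ • a x) (a x) τ := by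
      simpa using ((hasDerivAt_id τ).smul_const (a x)).const_add (ξ x)
    have h2 : HasDerivAt (fun τ : ℝ => κ x + τ • b x) (b x) τ := by
      simpa using ((hasDerivAt_id τ).smul_const (b x)).const_add (κ x)
    exact hd.comp_hasDerivAt τ (h1.prodMk h2)

end DensityIntegral

section Frame

variable {n : ℕ} {s p q c M : ℝ} {f f' h h' : ℝ → EuclideanSpace ℝ (Fin n)}

/-- The three tangents and the three normalized chords of a configuration. -/
def frameVector (f f' : ℝ → EuclideanSpace ℝ (Fin n)) (x : ℝ × ℝ × ℝ) :
    Fin 6 → EuclideanSpace ℝ (Fin n) :=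
  ![f' x.1, f' (x.1 + x.2.1), f' (x.1 - x.2.2), chordRight f x, chordLeft f x, chordOuter f x]

theorem frameVector_add_smul (f f' h h' : ℝ → EuclideanSpace ℝ (Fin n)) (τ : ℝ) (x : ℝ × ℝ × ℝ) :
    frameVector (fun u => f u + τ • h u) (fun u => f' u + τ • h' u) x =
      frameVector f f' x + τ • frameVector h h' x := by
  funext i
  fin_cases i <;> simp [frameVector, chordRight, chordLeft, chordOuter] <;> module

theorem weightedBend_add_smul (f h : ℝ → EuclideanSpace ℝ (Fin n)) (τ : ℝ) (x : ℝ × ℝ × ℝ) :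
    weightedBend p q (fun u => f u + τ • h u) x =
      weightedBend p q f x + τ • weightedBend p q h x := by
  simp only [weightedBend, chordRight, chordLeft]
  module

theorem frameVector_sub (f f' h h' : ℝ → EuclideanSpace ℝ (Fin n)) (x : ℝ × ℝ × ℝ) :
    frameVector (fun u => f u - h u) (fun u => f' u - h' u) x =
      frameVector f f' x - frameVector h h' x := by
  simpa [sub_eq_add_neg] using frameVector_add_smul f f' h h' (-1) x

theorem weightedBend_sub (f h : ℝ → EuclideanSpace ℝ (Fin n)) :
    weightedBend p q (fun u => f u - h u) = weightedBend p q f - weightedBend p q h := by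
  funext x
  simpa [sub_eq_add_neg] using weightedBend_add_smul (p := p) (q := q) f h (-1) x

theorem frameVector_linearCombination (f f' h h' : ℝ → EuclideanSpace ℝ (Fin n)) (a b : ℝ)
    (x : ℝ × ℝ × ℝ) : frameVector (a • f + b • h) (a • f' + b • h') x =
      a • frameVector f f' x + b • frameVector h h' x := by
  funext i
  fin_cases i <;> simp [frameVector, chordRight, chordLeft, chordOuter] <;> module

theorem weightedBend_linearCombination (f h : ℝ → EuclideanSpace ℝ (Fin n)) (a b : ℝ)
    (x : ℝ × ℝ × ℝ) : weightedBend p q (a • f + b • h) x =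
      a • weightedBend p q f x + b • weightedBend p q h x := by
  simp only [weightedBend, chordRight, chordLeft, Pi.add_apply, Pi.smul_apply]
  module

theorem measurable_frameVector (hf : Measurable f) (hf' : Measurable f') :
    Measurable (frameVector f f') := by
  refine measurable_pi_lambda _ fun i => ?_
  fin_cases i <;> simp [frameVector, chordRight, chordLeft, chordOuter] <;> fun_prop

theorem measurable_weightedBend (hf : Measurable f) : Measurable (weightedBend p q f) := by
  unfold weightedBend chordWeight chordRight chordLeft
  fun_prop

theorem quasiMeasurePreserving_shift {φ : ℝ × ℝ → ℝ} (hφ : Measurable φ) :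
    Measure.QuasiMeasurePreserving (fun x : ℝ × ℝ × ℝ => x.1 + φ x.2) arcMeasure volume := by
  have hm : Measurable fun x : ℝ × ℝ × ℝ => x.1 + φ x.2 := by fun_prop
  refine ⟨hm, Measure.AbsolutelyContinuous.mk fun t ht ht0 => ?_⟩
  rw [Measure.map_apply hm ht, arcMeasure, Measure.prod_apply_symm (hm ht)]
  refine (lintegral_congr fun d => ?_).trans lintegral_zero
  refine nonpos_iff_eq_zero.1 ((Measure.restrict_apply_le _ _).trans_eq ?_)
  exact (measure_preimage_add_right volume (φ d) t).trans ht0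

theorem ae_arcMeasure_of_ae {P : ℝ → Prop} (hP : ∀ᵐ t, P t) :
    ∀ᵐ x ∂arcMeasure, P x.1 ∧ P (x.1 + x.2.1) ∧ P (x.1 - x.2.2) := by
  have h0 := (quasiMeasurePreserving_shift (φ := fun _ => 0) measurable_const).ae hP
  have h1 := (quasiMeasurePreserving_shift measurable_fst).ae hP
  have h2 := (quasiMeasurePreserving_shift measurable_snd.neg).ae hP
  filter_upwards [h0, h1, h2] with x k0 k1 k2
  exact ⟨by simpa using k0, k1, by simpa [sub_eq_add_neg] using k2⟩

theorem InW.ae_norm_frameVector_le (hq : 1 < q) (hs : 0 ≤ s) (h : InW s q f f') (hM0 : 0 ≤ M)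
    (hM : ∀ᵐ x : ℝ, ‖f' x‖ ≤ M) : ∀ᵐ x ∂arcMeasure, ‖frameVector f f' x‖ ≤ M := by
  have hchord : ∀ u v t : ℝ, 0 < t → u - v = t → ‖t⁻¹ • (f u - f v)‖ ≤ M := fun u v t ht e => by
    have := h.norm_sub_le_of_ae_bound hq hs hM v u
    rw [e, abs_of_pos ht] at this
    rw [norm_smul, norm_inv, Real.norm_of_nonneg ht.le, inv_mul_le_iff₀ ht]
    linarith
  filter_upwards [ae_arcMeasure_mem, ae_arcMeasure_of_ae hM] with x hx hd
  have ha := hx.1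
  have hb := hx.2.1
  rw [pi_norm_le_iff_of_nonneg hM0]
  intro i
  fin_cases i
  · exact hd.1
  · exact hd.2.1
  · exact hd.2.2
  · exact hchord _ _ _ ha (by ring)
  · exact hchord _ _ _ hb (by ring)
  · exact hchord _ _ _ (add_pos ha hb) (by ring)

theorem ae_le_norm_frameVector (hreg : ∀ᵐ x : ℝ, c ≤ ‖f' x‖)
    (hbil : ∀ x t : ℝ, 0 ≤ t → t ≤ 2 / 3 → c * t ≤ ‖f (x + t) - f x‖) :
    ∀ᵐ x ∂arcMeasure, ∀ i, c ≤ ‖frameVector f f' x i‖ := by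
  have hchord : ∀ u v t : ℝ, 0 < t → t ≤ 2 / 3 → u = v + t → c ≤ ‖t⁻¹ • (f u - f v)‖ :=
    fun u v t ht ht' e => by
      rw [norm_smul, norm_inv, Real.norm_of_nonneg ht.le, le_inv_mul_iff₀ ht, e, mul_comm]
      exact hbil v t ht.le ht'
  filter_upwards [ae_arcMeasure_mem, ae_arcMeasure_of_ae hreg] with x hx hd i
  obtain ⟨ha, hb, h1, h2⟩ := hx
  fin_cases i
  · exact hd.1
  · exact hd.2.1
  · exact hd.2.2
  · exact hchord _ _ _ ha (by linarith) (by ring)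
  · exact hchord _ _ _ hb (by linarith) (by ring)
  · exact hchord _ _ _ (add_pos ha hb) (by linarith) (by ring)

theorem wedgeNorm_comm (a b : EuclideanSpace ℝ (Fin n)) : wedgeNorm a b = wedgeNorm b a := by
  rw [wedgeNorm, wedgeNorm, real_inner_comm, mul_comm]

theorem wedgeNorm_neg_sub (a b : EuclideanSpace ℝ (Fin n)) :
    wedgeNorm (-a) (b - a) = wedgeNorm a b := by
  rw [wedgeNorm, wedgeNorm, norm_neg, norm_sub_sq_real, inner_neg_left, inner_sub_right,
    real_inner_self_eq_norm_sq, real_inner_comm]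
  congr 1
  ring

theorem wedgeNorm_sub_right (a b : EuclideanSpace ℝ (Fin n)) :
    wedgeNorm a (a - b) = wedgeNorm a b := by
  rw [wedgeNorm, wedgeNorm, norm_sub_sq_real, inner_sub_right, real_inner_self_eq_norm_sq]
  congr 1
  ring

theorem wedgeNorm_smul_smul (α β : ℝ) (a b : EuclideanSpace ℝ (Fin n)) :
    wedgeNorm (α • a) (β • b) = |α * β| * wedgeNorm a b := by
  rw [wedgeNorm, wedgeNorm, ← Real.sqrt_sq (abs_nonneg (α * β)),
    ← Real.sqrt_mul (sq_nonneg _), sq_abs, norm_smul, norm_smul, inner_smul_left, inner_smul_right,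
    mul_pow, mul_pow, Real.norm_eq_abs, Real.norm_eq_abs, sq_abs, sq_abs]
  congr 1
  simp only [conj_trivial]
  ring

theorem invR_swap_left (p q : ℝ) (x y z : EuclideanSpace ℝ (Fin n)) :
    invR p q x y z = invR p q y x z := by
  have h := wedgeNorm_neg_sub (y - x) (z - x)
  rw [neg_sub, sub_sub_sub_cancel_right] at h
  rw [invR, invR, h, norm_sub_rev x z, norm_sub_rev x y, norm_sub_rev y z]
  congr 2
  ring

theorem invR_swap_right (p q : ℝ) (x y z : EuclideanSpace ℝ (Fin n)) :
    invR p q x y z = invR p q x z y := by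
  rw [invR, invR, wedgeNorm_comm, norm_sub_rev y z]
  congr 2
  ring

theorem mengerDensity_frameVector (hq : 0 < q) {x : ℝ × ℝ × ℝ} (ha : 0 < x.2.1) (hb : 0 < x.2.2)
    (hne : f (x.1 + x.2.1) ≠ f x.1) :
    mengerDensity p q (frameVector f f' x, weightedBend p q f x) =
      ‖f' x.1‖ * ‖f' (x.1 + x.2.1)‖ * ‖f' (x.1 - x.2.2)‖ *
        invR p q (f x.1) (f (x.1 + x.2.1)) (f (x.1 - x.2.2)) := by
  have hw0 : 0 ≤ chordWeight p q x := by unfold chordWeight; positivity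
  have hpow := chordWeight_rpow (p := p) hq ha hb
  have hP : chordRight f x ≠ 0 := smul_ne_zero (inv_ne_zero ha.ne') (sub_ne_zero.2 hne)
  set P := chordRight f x with hPdef
  set Q := chordLeft f x with hQdef
  set R := chordOuter f x with hRdef
  have e1 : f (x.1 + x.2.1) - f x.1 = x.2.1 • P := by
    rw [hPdef, chordRight, smul_inv_smul₀ ha.ne']
  have e2 : f (x.1 - x.2.2) - f x.1 = (-x.2.2) • Q := by
    rw [hQdef, chordLeft, neg_smul, smul_inv_smul₀ hb.ne', neg_sub]
  have e3 : f (x.1 + x.2.1) - f (x.1 - x.2.2) = (x.2.1 + x.2.2) • R := by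
    rw [hRdef, chordOuter, smul_inv_smul₀ (add_pos ha hb).ne']
  have hrej : ‖scaledRejection P (weightedBend p q f x)‖ = chordWeight p q x * wedgeNorm P Q := by
    rw [norm_scaledRejection hP]
    change wedgeNorm P (weightedBend p q f x) = _
    have := wedgeNorm_smul_smul 1 (chordWeight p q x) P (P - Q)
    rw [one_smul, one_mul, abs_of_nonneg hw0, wedgeNorm_sub_right] at this
    exact this
  have hwedge : 0 ≤ wedgeNorm P Q := Real.sqrt_nonneg _
  have hdens : mengerDensity p q (frameVector f f' x, weightedBend p q f x) =
      ‖f' x.1‖ * ‖f' (x.1 + x.2.1)‖ * ‖f' (x.1 - x.2.2)‖ *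
        ‖scaledRejection P (weightedBend p q f x)‖ ^ q / (‖P‖ * ‖Q‖ * ‖R‖) ^ p := rfl
  have hab : 0 < x.2.1 * x.2.2 := mul_pos ha hb
  rw [hdens, hrej, Real.mul_rpow hw0 hwedge, hpow, invR, e1, e2, e3, wedgeNorm_smul_smul, norm_smul,
    norm_smul, norm_smul, mul_neg, abs_neg, abs_of_pos hab, norm_neg, Real.norm_of_nonneg ha.le,
    Real.norm_of_nonneg hb.le, Real.norm_of_nonneg (add_pos ha hb).le,
    Real.mul_rpow hab.le hwedge,
    show (x.2.1 + x.2.2) * ‖R‖ * (x.2.1 * ‖P‖) * (x.2.2 * ‖Q‖) =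
      (x.2.1 * x.2.2) * (x.2.1 + x.2.2) * (‖P‖ * ‖Q‖ * ‖R‖) by ring,
    Real.mul_rpow (mul_pos hab (add_pos ha hb)).le (by positivity),
    Real.mul_rpow hab.le (add_pos ha hb).le,
    Real.rpow_sub hab, Real.rpow_neg (by positivity)]
  field_simp

/-- The energy as an integral over configurations of a middle point and two arcs. -/
theorem toReal_menger_eq (hq : 0 < q) (hf : Measurable f) (hf' : Measurable f')
    (hper : Function.Periodic f 1) (hper' : Function.Periodic f' 1)
    (hne : ∀ x t : ℝ, 0 < t → t ≤ 2 / 3 → f (x + t) ≠ f x) :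
    (menger p q f f').toReal =
      6 * ∫ x, mengerDensity p q (frameVector f f' x, weightedBend p q f x) ∂arcMeasure := by
  rw [menger, lintegral_torus_eq_arcMeasure (F := fun u₁ u₂ u₃ =>
    ENNReal.ofReal (‖f' u₁‖ * ‖f' u₂‖ * ‖f' u₃‖ * invR p q (f u₁) (f u₂) (f u₃)))]
  · rw [ENNReal.toReal_mul, integral_eq_lintegral_of_nonneg_ae
      (ae_of_all _ fun x => mengerDensity_nonneg _ _ _)
      (measurable_mengerDensity_comp (measurable_frameVector hf hf')
        (measurable_weightedBend hf)).aestronglyMeasurable]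
    congr 2
    refine lintegral_congr_ae ?_
    filter_upwards [ae_arcMeasure_mem] with x hx
    obtain ⟨ha, hb, h1, h2⟩ := hx
    rw [mengerDensity_frameVector hq ha hb (hne _ _ ha (by linarith))]
  · simp only [invR, wedgeNorm]
    fun_prop
  · intro u v w
    simp only [hper w, hper' w]
  · intro u v w
    rw [invR_swap_left, mul_comm ‖f' u‖]
  · intro u v w
    rw [invR_swap_right, mul_right_comm ‖f' u‖]

end Frame

section Differential

variable {n : ℕ} {p q : ℝ} {γ γ' h h' : ℝ → EuclideanSpace ℝ (Fin n)}

theorem one_div_lt_exponent (hq : 1 < q) (hp₁ : 2 / 3 * q + 1 < p) :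
    1 / q < (3 * p - 2 * q - 2) / q := by
  gcongr
  linarith

theorem sobNorm_sub_self (s : ℝ) (hq : 0 < q) (f f' : ℝ → EuclideanSpace ℝ (Fin n)) :
    sobNorm s q (fun u => f u - f u) (fun u => f' u - f' u) = 0 := by
  simp [sobNorm, sobSemiPow, Real.zero_rpow hq.ne', hq.ne']

theorem exists_frame_bounds (n : ℕ) (hq : 1 < q) (hp₁ : 2 / 3 * q + 1 < p)
    (hp₂ : p < q + 2 / 3) :
    ∃ K : ℝ, 0 ≤ K ∧ ∀ f f' : ℝ → EuclideanSpace ℝ (Fin n), InW ((3*p-2*q-2)/q) q f f' →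
      MemLp (weightedBend p q f) (ENNReal.ofReal q) arcMeasure ∧
      lqNorm q arcMeasure (weightedBend p q f) ≤ K * sobNorm ((3*p-2*q-2)/q) q f f' ∧
      ∀ᵐ x ∂arcMeasure, ‖frameVector f f' x‖ ≤ K * sobNorm ((3*p-2*q-2)/q) q f f' := by
  have hq0 : 0 < q := by linarith
  have hs := one_div_lt_exponent hq hp₁
  set s := (3*p-2*q-2)/q
  have hs0 : 0 ≤ s := le_trans (by positivity) hs.le
  obtain ⟨C₁, hC₁, hder⟩ := exists_ae_norm_deriv_le_sobNorm n hq hs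
  obtain ⟨C₂, hC₂, hbend⟩ := exists_lintegral_weightedBend_le n hq hp₁ hp₂
  refine ⟨max C₁ (C₂.toReal ^ (1 / q)), le_max_of_le_left hC₁, fun f f' hf => ?_⟩
  have hN := sobNorm_nonneg s q f f'
  have hm : Measurable (weightedBend p q f) := measurable_weightedBend (hf.continuous hq hs0).measurable
  have hle := hbend f f' hf
  have htop : C₂ * sobSemiPow s q f' < ⊤ := ENNReal.mul_lt_top hC₂.lt_top hf.2
  refine ⟨⟨hm.aestronglyMeasurable, ?_⟩, ?_, ?_⟩
  · rw [eLpNorm_lt_top_iff_lintegral_rpow_enorm_lt_top (by simpa using hq0) ENNReal.ofReal_ne_top,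
      ENNReal.toReal_ofReal hq0.le]
    exact hle.trans_lt htop
  · rw [lqNorm, integral_eq_lintegral_of_nonneg_ae (ae_of_all _ fun x => by positivity)
      (hm.norm.pow_const q).aestronglyMeasurable]
    simp only [ofReal_norm_rpow_eq _ hq0.le]
    calc _ ≤ (C₂ * sobSemiPow s q f').toReal ^ (1 / q) := by
          gcongr
          exact htop.ne
      _ = C₂.toReal ^ (1 / q) * (sobSemiPow s q f').toReal ^ (1 / q) := by
          rw [ENNReal.toReal_mul, Real.mul_rpow ENNReal.toReal_nonneg ENNReal.toReal_nonneg]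
      _ ≤ _ := by
          gcongr
          · exact le_max_right _ _
          · exact rpow_sobSemiPow_le_sobNorm s q f f'
  · have h1 := hf.ae_norm_frameVector_le hq hs0 (mul_nonneg hC₁ hN) (hder f f' hf)
    filter_upwards [h1] with x hx
    exact hx.trans (by gcongr; exact le_max_left _ _)

/-- The first variation of the energy. -/
def mengerDifferential (p q : ℝ) (γ γ' h h' : ℝ → EuclideanSpace ℝ (Fin n)) : ℝ :=
  6 * ∫ x, fderiv ℝ (mengerDensity p q) (frameVector γ γ' x, weightedBend p q γ x)
    (frameVector h h' x, weightedBend p q h x) ∂arcMeasure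

theorem ae_mem_normShell {c M : ℝ} (hreg : ∀ᵐ x : ℝ, c ≤ ‖γ' x‖)
    (hbil : ∀ x t : ℝ, 0 ≤ t → t ≤ 2 / 3 → c * t ≤ ‖γ (x + t) - γ x‖)
    (hM : ∀ᵐ x ∂arcMeasure, ‖frameVector γ γ' x‖ ≤ M) :
    ∀ᵐ x ∂arcMeasure, frameVector γ γ' x ∈ normShell (EuclideanSpace ℝ (Fin n)) c M := by
  filter_upwards [ae_le_norm_frameVector hreg hbil, hM] with x h1 h2 i
  exact ⟨h1 i, (norm_le_pi_norm _ i).trans h2⟩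

theorem InU.exists_lower_bound {s : ℝ} (hq : 1 < q) (hs : 1 / q < s) (hγ : InU s q γ γ') :
    ∃ c : ℝ, 0 < c ∧ (∀ᵐ x : ℝ, c ≤ ‖γ' x‖) ∧
      ∀ x t : ℝ, 0 ≤ t → t ≤ 2 / 3 → c * t ≤ ‖γ (x + t) - γ x‖ := by
  obtain ⟨ε, c, hε, hc, hopen⟩ := hγ.isOpen hq hs
  exact ⟨c, hc, (hopen γ γ' hγ.1
    ((sobNorm_sub_self s (by linarith) γ γ').trans_lt hε)).2⟩

theorem tendsto_menger_slope (hq : 1 < q) (hp₁ : 2 / 3 * q + 1 < p) (hp₂ : p < q + 2 / 3)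
    (hγ : InU ((3*p-2*q-2)/q) q γ γ') (hh : InW ((3*p-2*q-2)/q) q h h') :
    Tendsto (fun τ : ℝ =>
        ((menger p q (fun u => γ u + τ • h u) (fun u => γ' u + τ • h' u)).toReal
          - (menger p q γ γ').toReal) / τ)
      (𝓝[≠] (0:ℝ)) (𝓝 (mengerDifferential p q γ γ' h h')) := by
  have hq0 : 0 < q := by linarith
  have hs := one_div_lt_exponent hq hp₁
  obtain ⟨K, hK, hbounds⟩ := exists_frame_bounds n hq hp₁ hp₂
  obtain ⟨C, hC, hder⟩ := exists_ae_norm_deriv_le_sobNorm n hq hs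
  obtain ⟨c, hc, hreg, hbil⟩ := hγ.exists_lower_bound hq hs
  set s := (3*p-2*q-2)/q
  have hs0 : 0 ≤ s := le_trans (by positivity) hs.le
  obtain ⟨hγL, -, hγM⟩ := hbounds γ γ' hγ.1
  obtain ⟨hhL, -, hhM⟩ := hbounds h h' hh
  have hγm := (hγ.1.continuous hq hs0).measurable
  have hhm := (hh.continuous hq hs0).measurable
  have hderiv := (hasDerivAt_integral_mengerDensity (p := p) (by linarith) hq hc
    (measurable_frameVector hγm hγ.1.1.meas') (ae_mem_normShell hreg hbil hγM)
    (measurable_weightedBend hγm) hγL (measurable_frameVector hhm hh.1.meas') hhM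
    (measurable_weightedBend hhm) hhL).const_mul 6
  refine (hderiv.tendsto_slope_zero).congr' ?_
  set B := C * sobNorm s q h h' with hB
  have hB0 : 0 ≤ B := mul_nonneg hC (sobNorm_nonneg _ _ _ _)
  have hsmall : ∀ᶠ τ : ℝ in 𝓝[≠] 0, |τ| * B < c := by
    refine eventually_nhdsWithin_of_eventually_nhds ?_
    have : Tendsto (fun τ : ℝ => |τ| * B) (𝓝 0) (𝓝 (|0| * B)) :=
      Continuous.tendsto (by fun_prop) 0
    exact this.eventually_lt_const (by simpa using hc)
  have hformula : ∀ τ : ℝ, |τ| * B < c →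
      (menger p q (fun u => γ u + τ • h u) (fun u => γ' u + τ • h' u)).toReal =
        6 * ∫ x, mengerDensity p q (frameVector γ γ' x + τ • frameVector h h' x,
          weightedBend p q γ x + τ • weightedBend p q h x) ∂arcMeasure := by
    intro τ hτ
    rw [toReal_menger_eq (f := fun u => γ u + τ • h u) (f' := fun u => γ' u + τ • h' u) hq0
      (hγm.add (hhm.const_smul τ))
      (hγ.1.1.meas'.add (hh.1.meas'.const_smul τ))]
    · simp only [frameVector_add_smul, weightedBend_add_smul]
    · intro u
      simp only [hγ.1.1.periodic u, hh.1.periodic u]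
    · intro u
      simp only [hγ.1.1.periodic' u, hh.1.periodic' u]
    · intro x t ht ht' e
      have h1 := hbil x t ht.le ht'
      have h2 := hh.norm_sub_le_of_ae_bound hq hs0 (hder h h' hh) x (x + t)
      rw [add_sub_cancel_left, abs_of_pos ht] at h2
      have h3 : γ (x + t) - γ x = -(τ • (h (x + t) - h x)) := by
        rw [smul_sub, eq_neg_iff_add_eq_zero, ← sub_eq_zero.2 e]
        abel
      rw [h3, norm_neg, norm_smul, Real.norm_eq_abs] at h1
      have h4 : |τ| * ‖h (x + t) - h x‖ ≤ |τ| * (B * t) := by gcongr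
      nlinarith
  filter_upwards [hsmall] with τ hτ
  have h0 := hformula 0 (by simpa using hc)
  simp only [zero_smul, add_zero] at h0
  rw [hformula τ hτ, h0, zero_add, smul_eq_mul, inv_mul_eq_div]
  simp only [zero_smul, add_zero]

theorem InU.integrable_fderiv (hq : 1 < q) (hp₁ : 2 / 3 * q + 1 < p) (hp₂ : p < q + 2 / 3)
    (hγ : InU ((3*p-2*q-2)/q) q γ γ') (hh : InW ((3*p-2*q-2)/q) q h h') :
    Integrable (fun x => fderiv ℝ (mengerDensity p q)
      (frameVector γ γ' x, weightedBend p q γ x) (frameVector h h' x, weightedBend p q h x))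
      arcMeasure := by
  have hs := one_div_lt_exponent hq hp₁
  have hs0 : 0 ≤ (3*p-2*q-2)/q := le_trans (by positivity) hs.le
  obtain ⟨K, hK, hbounds⟩ := exists_frame_bounds n hq hp₁ hp₂
  obtain ⟨c, hc, hreg, hbil⟩ := hγ.exists_lower_bound hq hs
  obtain ⟨hγL, -, hγM⟩ := hbounds γ γ' hγ.1
  obtain ⟨hhL, -, hhM⟩ := hbounds h h' hh
  have hγm := (hγ.1.continuous hq hs0).measurable
  have hhm := (hh.continuous hq hs0).measurable
  exact integrable_fderiv_mengerDensity hq hc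
    (measurable_frameVector hγm hγ.1.1.meas') (ae_mem_normShell hreg hbil hγM)
    (measurable_weightedBend hγm) hγL (measurable_frameVector hhm hh.1.meas') hhM
    (measurable_weightedBend hhm) hhL

theorem mengerDifferential_linearCombination (hq : 1 < q) (hp₁ : 2 / 3 * q + 1 < p)
    (hp₂ : p < q + 2 / 3) (hγ : InU ((3*p-2*q-2)/q) q γ γ')
    {h₁ h₁' h₂ h₂' : ℝ → EuclideanSpace ℝ (Fin n)} (a b : ℝ)
    (hh₁ : InW ((3*p-2*q-2)/q) q h₁ h₁') (hh₂ : InW ((3*p-2*q-2)/q) q h₂ h₂') :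
    mengerDifferential p q γ γ' (a • h₁ + b • h₂) (a • h₁' + b • h₂') =
      a * mengerDifferential p q γ γ' h₁ h₁' + b * mengerDifferential p q γ γ' h₂ h₂' := by
  have i1 := hγ.integrable_fderiv hq hp₁ hp₂ hh₁
  have i2 := hγ.integrable_fderiv hq hp₁ hp₂ hh₂
  have key : ∀ x, fderiv ℝ (mengerDensity p q) (frameVector γ γ' x, weightedBend p q γ x)
      (frameVector (a • h₁ + b • h₂) (a • h₁' + b • h₂') x,
        weightedBend p q (a • h₁ + b • h₂) x) =
      a * fderiv ℝ (mengerDensity p q) (frameVector γ γ' x, weightedBend p q γ x)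
        (frameVector h₁ h₁' x, weightedBend p q h₁ x) +
      b * fderiv ℝ (mengerDensity p q) (frameVector γ γ' x, weightedBend p q γ x)
        (frameVector h₂ h₂' x, weightedBend p q h₂ x) := fun x => by
    rw [frameVector_linearCombination, weightedBend_linearCombination, ← smul_eq_mul,
      ← smul_eq_mul, ← map_smul, ← map_smul, ← map_add]
    rfl
  simp only [mengerDifferential, key]
  rw [integral_add (i1.const_mul a) (i2.const_mul b), integral_const_mul, integral_const_mul]
  ring

theorem exists_abs_mengerDifferential_le (hq : 1 < q) (hp₁ : 2 / 3 * q + 1 < p)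
    (hp₂ : p < q + 2 / 3) (hγ : InU ((3*p-2*q-2)/q) q γ γ') :
    ∃ C : ℝ, ∀ h h' : ℝ → EuclideanSpace ℝ (Fin n), InW ((3*p-2*q-2)/q) q h h' →
      |mengerDifferential p q γ γ' h h'| ≤ C * sobNorm ((3*p-2*q-2)/q) q h h' := by
  have hs := one_div_lt_exponent hq hp₁
  have hs0 : 0 ≤ (3*p-2*q-2)/q := le_trans (by positivity) hs.le
  obtain ⟨K, hK, hbounds⟩ := exists_frame_bounds n hq hp₁ hp₂
  obtain ⟨c, hc, hreg, hbil⟩ := hγ.exists_lower_bound hq hs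
  obtain ⟨hγL, -, hγM⟩ := hbounds γ γ' hγ.1
  obtain ⟨C, hC0, hC⟩ := exists_abs_integral_fderiv_mengerDensity_le
    (V := EuclideanSpace ℝ (Fin n)) arcMeasure p hq hc (K * sobNorm ((3*p-2*q-2)/q) q γ γ')
  set N := lqNorm q arcMeasure (weightedBend p q γ)
  have hN : 0 ≤ N := lqNorm_nonneg _ _ _
  refine ⟨6 * (C * ((N ^ q + N ^ (q - 1)) * K)), fun h h' hh => ?_⟩
  obtain ⟨hhL, hhN, hhM⟩ := hbounds h h' hh
  have hhm := (hh.continuous hq hs0).measurable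
  have key := hC _ _ _ _ _ (ae_mem_normShell hreg hbil hγM) hγL
    (measurable_frameVector hhm hh.1.meas') hhM hhL
  rw [mengerDifferential, abs_mul, abs_of_pos (by norm_num : (0 : ℝ) < 6), mul_assoc]
  refine mul_le_mul_of_nonneg_left (key.trans ?_) (by norm_num)
  rw [mul_assoc, mul_assoc, add_mul]
  gcongr

theorem exists_abs_mengerDifferential_sub_le (hq : 1 < q) (hp₁ : 2 / 3 * q + 1 < p)
    (hp₂ : p < q + 2 / 3) (hγ : InU ((3*p-2*q-2)/q) q γ γ') {ε : ℝ} (hε : 0 < ε) :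
    ∃ δ : ℝ, 0 < δ ∧ ∀ η η' : ℝ → EuclideanSpace ℝ (Fin n), InU ((3*p-2*q-2)/q) q η η' →
      sobNorm ((3*p-2*q-2)/q) q (fun u => η u - γ u) (fun u => η' u - γ' u) < δ →
      ∀ h h' : ℝ → EuclideanSpace ℝ (Fin n), InW ((3*p-2*q-2)/q) q h h' →
        sobNorm ((3*p-2*q-2)/q) q h h' ≤ 1 →
        |mengerDifferential p q η η' h h' - mengerDifferential p q γ γ' h h'| ≤ ε := by
  have hq0 : 0 < q := by linarith
  have hs := one_div_lt_exponent hq hp₁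
  set s := (3*p-2*q-2)/q with hsdef
  have hs0 : 0 ≤ s := le_trans (by positivity) hs.le
  obtain ⟨K, hK, hbounds⟩ := exists_frame_bounds n hq hp₁ hp₂
  rw [← hsdef] at hbounds
  obtain ⟨ε₀, c, hε₀, hc, hopen⟩ := hγ.isOpen hq hs
  obtain ⟨-, hreg, hbil⟩ := hopen γ γ' hγ.1 ((sobNorm_sub_self s hq0 γ γ').trans_lt hε₀)
  obtain ⟨hγL, -, hγM⟩ := hbounds γ γ' hγ.1
  set N := lqNorm q arcMeasure (weightedBend p q γ) with hN
  have hN0 : 0 ≤ N := lqNorm_nonneg _ _ _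
  set M := K * sobNorm s q γ γ' + K with hM
  set L := (N ^ q + N ^ (q - 1)) * K with hL
  have hL0 : 0 ≤ L := by positivity
  obtain ⟨δ₁, hδ₁, C, hC0, hC⟩ := exists_abs_integral_fderiv_mengerDensity_sub_le
    (V := EuclideanSpace ℝ (Fin n)) arcMeasure p hq hc M
    (ε := ε / (12 * (L + 1))) (by positivity)
  have hlim : Tendsto (fun t : ℝ => 6 * (C * (((K * t) ^ q + (K * t) ^ (q - 1)) * K)))
      (𝓝 0) (𝓝 0) := by
    have hcont : Continuous fun t : ℝ => 6 * (C * (((K * t) ^ q + (K * t) ^ (q - 1)) * K)) := by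
      have h1 : Continuous fun t : ℝ => (K * t) ^ q :=
        (continuous_const.mul continuous_id).rpow_const fun _ => Or.inr hq0.le
      have h2 : Continuous fun t : ℝ => (K * t) ^ (q - 1) :=
        (continuous_const.mul continuous_id).rpow_const fun _ => Or.inr (by linarith)
      fun_prop
    simpa [Real.zero_rpow hq0.ne', Real.zero_rpow (by linarith : q - 1 ≠ 0)] using hcont.tendsto 0
  obtain ⟨δ₂, hδ₂, hsmall⟩ := Metric.eventually_nhds_iff.1
    (hlim.eventually_lt_const (half_pos hε))
  refine ⟨min (min ε₀ 1) (min (δ₁ / (K + 1)) δ₂), by positivity, fun η η' hη hd h h' hh hh1 => ?_⟩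
  have hsub := hη.1.sub hq hs0 hγ.1
  set d := sobNorm s q (fun u => η u - γ u) (fun u => η' u - γ' u) with hddef
  have hd0 : 0 ≤ d := sobNorm_nonneg _ _ _ _
  simp only [lt_min_iff] at hd
  obtain ⟨⟨hdε₀, hd1⟩, hdδ₁, hdδ₂⟩ := hd
  obtain ⟨-, hregη, hbilη⟩ := hopen η η' hη.1 hdε₀
  obtain ⟨hηL, -, -⟩ := hbounds η η' hη.1
  obtain ⟨-, hdN, hdM⟩ := hbounds _ _ hsub
  obtain ⟨hhL, hhN, hhM⟩ := hbounds h h' hh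
  rw [← hddef] at hdN hdM
  have hhN' : lqNorm q arcMeasure (weightedBend p q h) ≤ K :=
    hhN.trans (mul_le_of_le_one_right hK hh1)
  have hhM' : ∀ᵐ x ∂arcMeasure, ‖frameVector h h' x‖ ≤ K :=
    hhM.mono fun x hx => hx.trans (mul_le_of_le_one_right hK hh1)
  have hγM' : ∀ᵐ x ∂arcMeasure, ‖frameVector γ γ' x‖ ≤ M :=
    hγM.mono fun x hx => hx.trans (by linarith)
  have hηM : ∀ᵐ x ∂arcMeasure, ‖frameVector η η' x‖ ≤ M := by
    filter_upwards [hγM, hdM] with x h1 h2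
    rw [frameVector_sub] at h2
    have h3 := norm_le_norm_add_norm_sub' (frameVector η η' x) (frameVector γ γ' x)
    have h4 : K * d ≤ K := mul_le_of_le_one_right hK hd1.le
    linarith
  have hclose : ∀ᵐ x ∂arcMeasure, ‖frameVector η η' x - frameVector γ γ' x‖ < δ₁ := by
    filter_upwards [hdM] with x hx
    rw [frameVector_sub] at hx
    rw [lt_div_iff₀ (by positivity)] at hdδ₁
    linarith
  have hγm := (hγ.1.continuous hq hs0).measurable
  have hηm := (hη.1.continuous hq hs0).measurable
  have hhm := (hh.continuous hq hs0).measurable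
  have key := hC _ _ _ _ _ _ _ (measurable_frameVector hγm hγ.1.1.meas')
    (measurable_frameVector hηm hη.1.1.meas') (measurable_weightedBend hγm)
    (measurable_weightedBend hηm) (measurable_weightedBend hhm)
    (ae_mem_normShell hreg hbil hγM') (ae_mem_normShell hregη hbilη hηM) hclose hγL hηL
    (measurable_frameVector hhm hh.1.meas') hhM' hhL
  rw [← weightedBend_sub, ← hN] at key
  have hmaj : ∀ {t T : ℝ}, 0 ≤ t → t ≤ T →
      t ^ q * K + t ^ (q - 1) * lqNorm q arcMeasure (weightedBend p q h) ≤
        (T ^ q + T ^ (q - 1)) * K := fun {t T} ht htT => by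
    have hT : 0 ≤ T := ht.trans htT
    rw [add_mul]
    exact add_le_add (mul_le_mul_of_nonneg_right (Real.rpow_le_rpow ht htT hq0.le) hK)
      (mul_le_mul (Real.rpow_le_rpow ht htT (by linarith)) hhN' (lqNorm_nonneg _ _ _)
        (Real.rpow_nonneg hT _))
  have h1 := hmaj hN0 le_rfl
  have h2 := hmaj (lqNorm_nonneg q arcMeasure _) hdN
  have h3 : 6 * (C * (((K * d) ^ q + (K * d) ^ (q - 1)) * K)) < ε / 2 := hsmall (by
    rwa [Real.dist_eq, sub_zero, abs_of_nonneg hd0])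
  have h4 : 6 * (ε / (12 * (L + 1)) * L) ≤ ε / 2 := by
    rw [show 6 * (ε / (12 * (L + 1)) * L) = ε / 2 * (L / (L + 1)) by field_simp; ring]
    refine mul_le_of_le_one_right (by positivity) ((div_le_one (by positivity)).2 (by linarith))
  rw [mengerDifferential, mengerDifferential, ← mul_sub, abs_mul,
    abs_of_pos (by norm_num : (0 : ℝ) < 6)]
  have h5 := mul_le_mul_of_nonneg_left h1 (by positivity : 0 ≤ ε / (12 * (L + 1)))
  have h6 := mul_le_mul_of_nonneg_left h2 hC0
  linarith

end Differential

/-- **`E_{p,q}` is `C¹` on regular embedded `W^{(3p-2)/q-1,q}`-curves.**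
In the sub-critical range: the set `U` of injective regular curves is open
in `W`, the energy is Gâteaux differentiable on `U` with differential a
bounded linear functional on `W`, and the differential depends continuously
(in the dual norm) on the curve. -/
theorem energy_C1 (n : ℕ) (p q : ℝ)
    (hq : 1 < q) (hp₁ : 2/3 * q + 1 < p) (hp₂ : p < q + 2/3) :
    -- `U` is open in `W`
    (∀ γ γ' : ℝ → EuclideanSpace ℝ (Fin n), InU ((3*p-2*q-2)/q) q γ γ' →
      ∃ ε : ℝ, 0 < ε ∧ ∀ η η' : ℝ → EuclideanSpace ℝ (Fin n),
        InW ((3*p-2*q-2)/q) q η η' →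
        sobNorm ((3*p-2*q-2)/q) q (fun u => η u - γ u) (fun u => η' u - γ' u) < ε →
        InU ((3*p-2*q-2)/q) q η η') ∧
    -- Gâteaux differentiability, boundedness and continuity of the differential
    (∃ DE : (ℝ → EuclideanSpace ℝ (Fin n)) → (ℝ → EuclideanSpace ℝ (Fin n)) →
        (ℝ → EuclideanSpace ℝ (Fin n)) → (ℝ → EuclideanSpace ℝ (Fin n)) → ℝ,
      ∀ γ γ' : ℝ → EuclideanSpace ℝ (Fin n), InU ((3*p-2*q-2)/q) q γ γ' →
        -- the Gâteaux derivative exists and equals `DE γ γ' · ·`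
        (∀ h h' : ℝ → EuclideanSpace ℝ (Fin n), InW ((3*p-2*q-2)/q) q h h' →
          Tendsto (fun τ : ℝ =>
              ((menger p q (fun u => γ u + τ • h u) (fun u => γ' u + τ • h' u)).toReal
                - (menger p q γ γ').toReal) / τ)
            (𝓝[≠] (0:ℝ)) (𝓝 (DE γ γ' h h'))) ∧
        -- linearity in the direction
        (∀ h₁ h₁' h₂ h₂' : ℝ → EuclideanSpace ℝ (Fin n), ∀ a b : ℝ,
          InW ((3*p-2*q-2)/q) q h₁ h₁' → InW ((3*p-2*q-2)/q) q h₂ h₂' →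
          DE γ γ' (a • h₁ + b • h₂) (a • h₁' + b • h₂') =
            a * DE γ γ' h₁ h₁' + b * DE γ γ' h₂ h₂') ∧
        -- boundedness on `W`
        (∃ C : ℝ, ∀ h h' : ℝ → EuclideanSpace ℝ (Fin n),
          InW ((3*p-2*q-2)/q) q h h' →
          |DE γ γ' h h'| ≤ C * sobNorm ((3*p-2*q-2)/q) q h h') ∧
        -- continuity of `γ ↦ DE γ γ'` from `U` to `W*`
        (∀ ε : ℝ, 0 < ε → ∃ δ : ℝ, 0 < δ ∧
          ∀ η η' : ℝ → EuclideanSpace ℝ (Fin n), InU ((3*p-2*q-2)/q) q η η' →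
            sobNorm ((3*p-2*q-2)/q) q (fun u => η u - γ u) (fun u => η' u - γ' u) < δ →
            ∀ h h' : ℝ → EuclideanSpace ℝ (Fin n), InW ((3*p-2*q-2)/q) q h h' →
              sobNorm ((3*p-2*q-2)/q) q h h' ≤ 1 →
              |DE η η' h h' - DE γ γ' h h'| ≤ ε)) := by
  refine ⟨fun γ γ' hγ => ?_, mengerDifferential p q, fun γ γ' hγ =>
    ⟨fun h h' hh => tendsto_menger_slope hq hp₁ hp₂ hγ hh,
      fun _ _ _ _ a b hh₁ hh₂ => mengerDifferential_linearCombination hq hp₁ hp₂ hγ a b hh₁ hh₂,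
      exists_abs_mengerDifferential_le hq hp₁ hp₂ hγ,
      fun ε hε => exists_abs_mengerDifferential_sub_le hq hp₁ hp₂ hγ hε⟩⟩
  obtain ⟨ε, _, hε, _, hopen⟩ := hγ.isOpen hq (one_div_lt_exponent hq hp₁)
  exact ⟨ε, hε, fun η η' hη hlt => (hopen η η' hη hlt).1⟩
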